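/- Under the setup below, let u be a classical solution with initial datum φ ∈ L²(D) and such that t ↦ ‖u(t,·,·)‖²_{L²(D)} is absolutely continuous on [0,T]. Then for almost every t ∈ [0,T], ‖u(t,·,·)‖²_{L²(D)} ≤ ‖φ‖²_{L²(D)} · E_α(2 L_ω² t^α) + Γ(α) · E_{α,α}(2 L_ω² t^α) · J^α c₂(t), where L_ω² = ℓ₀² ‖ω‖²/‖ω′‖² + (3/2) f_M² ‖ω′‖² + ℓ₀ + 1/2 and c₂(t) = (1 + 2‖ω‖²/‖ω′‖²) ‖g(t,·,·,0)‖²_{L²(D)} + ‖a(t,·)‖²_{L²(G)}/‖ω′‖². -/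

import Mathlib

/-!
The proof is the energy method. Write `N(t) = ‖u(t)‖²` and `L` for the constant `L_ω²`.

In time, the inequality `v(t)² - v(0)² ≤ J^α (2 v D^α v)(t)` (`sq_sub_sq_le_rlInt`) replaces the
chain rule. It rests on the inversion `J^α D^α v = v - v(0)` (`rlInt_caputo`), which follows from
the composition law of fractional kernels, a Beta integral, and on the pointwise inequality
`D^α (v²) ≤ 2 v D^α v` (`alikhanov`). Integrated over `D` by Fubini, it gives
`N(t) - N(0) ≤ J^α (∫ 2 u D^α u)(t)` (`energy_le_rlInt`); only integrability of `∂ₜu` over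
`(0,T) × D` is needed for this.

In space, at a fixed time, the equation is tested with `u` itself. Because of the compact support
of `u`, integration by parts turns the Laplacian into `-‖∇u‖²`. The nonlocal coefficient `h` is
estimated on each slice `x = const` by Cauchy–Schwarz, the Lipschitz condition on `g` and Young's
inequality (`slice_estimate`); the one term `‖u_y‖²` it produces is absorbed by `-‖∇u‖²`
(`spatial_estimate`). The outcome is `∫ 2 u D^α u ≤ 2 L N + c₂`.

Hence `N ≤ N(0) + J^α (2 L N + c₂)`. Iterating this inequality and letting the remainder
`J^{kα}` tend to zero yields the Mittag-Leffler bound (`fractional_gronwall`).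
-/

open MeasureTheory Real

/-- Riemann–Liouville fractional integral of order `α` (with base point `0`). -/
noncomputable def rlInt (α : ℝ) (v : ℝ → ℝ) (t : ℝ) : ℝ :=
  (1 / Real.Gamma α) * ∫ τ in (0:ℝ)..t, (t - τ) ^ (α - 1) * v τ

/-- Caputo fractional derivative of order `α ∈ (0,1)` of an absolutely continuous
function whose a.e. derivative is `v'`. -/
noncomputable def caputo (α : ℝ) (v' : ℝ → ℝ) (t : ℝ) : ℝ :=
  (1 / Real.Gamma (1 - α)) * ∫ τ in (0:ℝ)..t, (t - τ) ^ (-α) * v' τ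

/-- Two-parameter Mittag-Leffler function (real arguments). -/
noncomputable def mittagLeffler (ρ μ z : ℝ) : ℝ :=
  ∑' k : ℕ, z ^ k / Real.Gamma (ρ * k + μ)

/-- The `L²(0,π)` inner product `(p,q) = ∫_0^π p q dy`. -/
noncomputable def l2ip (p q : ℝ → ℝ) : ℝ := ∫ y in Set.Ioo (0:ℝ) π, p y * q y

/-- The squared `L²(0,π)` norm `‖p‖² = ∫_0^π p² dy`. -/
noncomputable def l2sq (p : ℝ → ℝ) : ℝ := ∫ y in Set.Ioo (0:ℝ) π, (p y) ^ 2

/-! ### The Beta kernel and Fubini for iterated fractional integrals -/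

/-- The kernel `(t - s)^(a-1) (s - τ)^(b-1)` of an iterated fractional integral, cut off to
`τ < s` so that it can be integrated over rectangles. -/
noncomputable def fracKernel (a b t τ s : ℝ) : ℝ :=
  if τ < s then (t - s) ^ (a - 1) * (s - τ) ^ (b - 1) else 0

lemma integral_beta_kernel {a b τ t : ℝ} (ha : 0 < a) (hb : 0 < b) (h : τ < t) :
    ∫ s in τ..t, (t - s) ^ (a - 1) * (s - τ) ^ (b - 1)
      = ProbabilityTheory.beta a b * (t - τ) ^ (a + b - 1) := by
  have hL : 0 < t - τ := sub_pos.2 h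
  have h1 : ∫ s in τ..t, (t - s) ^ (a - 1) * (s - τ) ^ (b - 1)
      = ∫ x in (0:ℝ)..(t - τ), x ^ (b - 1) * ((t - τ) - x) ^ (a - 1) := by
    have := intervalIntegral.integral_comp_sub_right (a := τ) (b := t)
      (fun x : ℝ => x ^ (b - 1) * ((t - τ) - x) ^ (a - 1)) τ
    rw [sub_self] at this
    rw [← this]
    congr 1
    ext s
    rw [mul_comm]
    congr 2
    ring
  rw [h1]
  have h2 := Complex.betaIntegral_scaled (b : ℂ) (a : ℂ) hL
  have h3 : ∫ x in (0:ℝ)..(t - τ), (x : ℂ) ^ ((b : ℂ) - 1) * (((t - τ : ℝ) : ℂ) - x) ^ ((a : ℂ) - 1)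
      = ((∫ x in (0:ℝ)..(t - τ), x ^ (b - 1) * ((t - τ) - x) ^ (a - 1) : ℝ) : ℂ) := by
    rw [← intervalIntegral.integral_ofReal]
    apply intervalIntegral.integral_congr
    intro x hx
    rw [Set.uIcc_of_le hL.le] at hx
    simp only
    rw [Complex.ofReal_mul, Complex.ofReal_cpow hx.1, Complex.ofReal_cpow (by linarith [hx.2])]
    push_cast
    rfl
  rw [h3, Complex.betaIntegral_eq_Gamma_mul_div _ _ (by simpa) (by simpa)] at h2
  have h4 : (((t - τ : ℝ) : ℂ)) ^ ((b : ℂ) + a - 1) = (((t - τ) ^ (a + b - 1) : ℝ) : ℂ) := by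
    rw [Complex.ofReal_cpow hL.le]
    push_cast
    congr 1
    ring
  rw [h4, ← Complex.ofReal_add, Complex.Gamma_ofReal, Complex.Gamma_ofReal,
    Complex.Gamma_ofReal] at h2
  have h5 := congrArg Complex.re h2
  rw [← Complex.ofReal_mul, ← Complex.ofReal_div, ← Complex.ofReal_mul, Complex.ofReal_re,
    Complex.ofReal_re] at h5
  rw [h5, ProbabilityTheory.beta, add_comm b a]
  ring

lemma measurable_fracKernel (a b t : ℝ) :
    Measurable (fun q : ℝ × ℝ => fracKernel a b t q.1 q.2) := by
  unfold fracKernel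
  refine Measurable.ite (measurableSet_lt measurable_fst measurable_snd) ?_ measurable_const
  exact ((measurable_const.sub measurable_snd).pow_const _).mul
    ((measurable_snd.sub measurable_fst).pow_const _)

lemma fracKernel_nonneg (a b : ℝ) {t s : ℝ} (τ : ℝ) (hs : s ≤ t) : 0 ≤ fracKernel a b t τ s := by
  unfold fracKernel
  split_ifs with h
  · exact mul_nonneg (rpow_nonneg (by linarith) _) (rpow_nonneg (by linarith) _)
  · exact le_rfl

lemma integral_fracKernel {a b τ t : ℝ} (ha : 0 < a) (hb : 0 < b) (h0 : 0 ≤ τ) (h : τ < t) :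
    ∫ s in Set.Ioo 0 t, fracKernel a b t τ s
      = ProbabilityTheory.beta a b * (t - τ) ^ (a + b - 1) := by
  rw [← integral_beta_kernel ha hb h, intervalIntegral.integral_of_le h.le,
    integral_Ioc_eq_integral_Ioo]
  have : (fun s => fracKernel a b t τ s)
      = (Set.Ioi τ).indicator (fun s => (t - s) ^ (a - 1) * (s - τ) ^ (b - 1)) := by
    ext s
    simp [fracKernel, Set.indicator_apply]
  rw [this, setIntegral_indicator measurableSet_Ioi]
  congr 2
  ext s
  simp only [Set.mem_inter_iff, Set.mem_Ioo, Set.mem_Ioi]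
  constructor
  · rintro ⟨⟨_, h2⟩, h3⟩; exact ⟨h3, h2⟩
  · rintro ⟨h2, h3⟩; exact ⟨⟨by linarith, h3⟩, h2⟩

lemma integrable_fracKernel {a b τ t : ℝ} (ha : 0 < a) (hb : 0 < b) (h0 : 0 ≤ τ) (h : τ < t) :
    IntegrableOn (fun s => fracKernel a b t τ s) (Set.Ioo 0 t) := by
  -- a non-integrable function would have Bochner integral `0`
  by_contra hc
  have h1 := integral_fracKernel ha hb h0 h
  rw [integral_undef hc] at h1
  have := mul_pos (ProbabilityTheory.beta_pos ha hb)
    (rpow_pos_of_pos (sub_pos.2 h) (a + b - 1))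
  linarith

/-- Integrability of the iterated kernel against a weight `p` on an auxiliary space `Y`, where
`θ y` is the time coordinate of `y`; the case `Y = ℝ × Z` carries the spatial variables along. -/
lemma integrable_fracKernel_mul {Y : Type*} [MeasurableSpace Y] {μ : Measure Y} [SFinite μ]
    {a b t : ℝ} (ha : 0 < a) (hb : 0 < b) {θ : Y → ℝ} (hθ : Measurable θ)
    (hθt : ∀ᵐ y ∂μ, 0 < θ y ∧ θ y < t) {p : Y → ℝ} (hp : AEStronglyMeasurable p μ)
    (hpi : Integrable (fun y => (t - θ y) ^ (a + b - 1) * p y) μ) :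
    Integrable (fun q : ℝ × Y => fracKernel a b t (θ q.2) q.1 * p q.2)
      ((volume.restrict (Set.Ioo 0 t)).prod μ) := by
  have hm : AEStronglyMeasurable (fun q : ℝ × Y => fracKernel a b t (θ q.2) q.1 * p q.2)
      ((volume.restrict (Set.Ioo 0 t)).prod μ) := by
    refine AEStronglyMeasurable.mul ?_ hp.comp_snd
    exact ((measurable_fracKernel a b t).comp
      ((hθ.comp measurable_snd).prodMk measurable_fst)).aestronglyMeasurable
  rw [integrable_prod_iff' hm]
  constructor
  · filter_upwards [hθt] with y hy
    exact (integrable_fracKernel ha hb hy.1.le hy.2).mul_const _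
  · have := (hpi.norm.const_mul (ProbabilityTheory.beta a b))
    refine this.congr ?_
    filter_upwards [hθt] with y hy
    have h1 : ∫ s in Set.Ioo 0 t, ‖fracKernel a b t (θ y) s * p y‖
        = ∫ s in Set.Ioo 0 t, fracKernel a b t (θ y) s * |p y| := by
      refine setIntegral_congr_fun measurableSet_Ioo fun s hs => ?_
      simp only [norm_mul, Real.norm_eq_abs]
      rw [abs_of_nonneg (fracKernel_nonneg a b _ hs.2.le)]
    rw [h1, integral_mul_const, integral_fracKernel ha hb hy.1.le hy.2, norm_mul,
      Real.norm_of_nonneg (rpow_nonneg (by linarith [hy.2]) _), Real.norm_eq_abs]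
    ring

/-- For `0 < s` the cut-off kernel turns the outer integral over `(0,t)` into one over `(0,s)`. -/
lemma setIntegral_fracKernel_mul {a b t s : ℝ} (hs : 0 < s) (hst : s ≤ t) (p : ℝ → ℝ) :
    ∫ τ in Set.Ioo 0 t, fracKernel a b t τ s * p τ
      = (t - s) ^ (a - 1) * ∫ τ in (0:ℝ)..s, (s - τ) ^ (b - 1) * p τ := by
  rw [intervalIntegral.integral_of_le hs.le, integral_Ioc_eq_integral_Ioo, ← integral_const_mul]
  have : (fun τ => fracKernel a b t τ s * p τ) = (Set.Iio s).indicator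
      (fun τ => (t - s) ^ (a - 1) * ((s - τ) ^ (b - 1) * p τ)) := by
    ext τ
    simp only [fracKernel, Set.indicator_apply, Set.mem_Iio]
    split_ifs
    · ring
    · ring
  rw [this, setIntegral_indicator measurableSet_Iio]
  congr 2
  ext τ
  simp only [Set.mem_inter_iff, Set.mem_Ioo, Set.mem_Iio]
  constructor
  · rintro ⟨⟨h1, _⟩, h3⟩; exact ⟨h1, h3⟩
  · rintro ⟨h2, h3⟩; exact ⟨⟨h2, by linarith⟩, h3⟩

lemma integrable_fracKernel_id {a b t : ℝ} (ha : 0 < a) (hb : 0 < b) {p : ℝ → ℝ}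
    (hp : AEStronglyMeasurable p (volume.restrict (Set.Ioo 0 t)))
    (hpi : IntegrableOn (fun τ => (t - τ) ^ (a + b - 1) * p τ) (Set.Ioo 0 t)) :
    Integrable (fun q : ℝ × ℝ => fracKernel a b t q.2 q.1 * p q.2)
      ((volume.restrict (Set.Ioo 0 t)).prod (volume.restrict (Set.Ioo 0 t))) :=
  integrable_fracKernel_mul ha hb measurable_id
    (ae_restrict_of_forall_mem measurableSet_Ioo fun _ h => h) hp hpi

lemma integrableOn_iterated {a b t : ℝ} (ha : 0 < a) (hb : 0 < b) {p : ℝ → ℝ}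
    (hp : AEStronglyMeasurable p (volume.restrict (Set.Ioo 0 t)))
    (hpi : IntegrableOn (fun τ => (t - τ) ^ (a + b - 1) * p τ) (Set.Ioo 0 t)) :
    IntegrableOn (fun s => (t - s) ^ (a - 1) * ∫ τ in (0:ℝ)..s, (s - τ) ^ (b - 1) * p τ)
      (Set.Ioo 0 t) := by
  refine (integrable_fracKernel_id ha hb hp hpi).integral_prod_left.congr ?_
  refine ae_restrict_of_forall_mem measurableSet_Ioo fun s hs => ?_
  exact setIntegral_fracKernel_mul hs.1 hs.2.le p

lemma integral_iterated {a b t : ℝ} (ha : 0 < a) (hb : 0 < b) (ht : 0 ≤ t) {p : ℝ → ℝ}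
    (hp : AEStronglyMeasurable p (volume.restrict (Set.Ioo 0 t)))
    (hpi : IntegrableOn (fun τ => (t - τ) ^ (a + b - 1) * p τ) (Set.Ioo 0 t)) :
    ∫ s in (0:ℝ)..t, (t - s) ^ (a - 1) * ∫ τ in (0:ℝ)..s, (s - τ) ^ (b - 1) * p τ
      = ProbabilityTheory.beta a b * ∫ τ in (0:ℝ)..t, (t - τ) ^ (a + b - 1) * p τ := by
  rw [intervalIntegral.integral_of_le ht, integral_Ioc_eq_integral_Ioo,
    intervalIntegral.integral_of_le ht, integral_Ioc_eq_integral_Ioo, ← integral_const_mul]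
  have h1 : ∫ s in Set.Ioo 0 t, (t - s) ^ (a - 1) * ∫ τ in (0:ℝ)..s, (s - τ) ^ (b - 1) * p τ
      = ∫ s in Set.Ioo 0 t, ∫ τ in Set.Ioo 0 t, fracKernel a b t τ s * p τ :=
    setIntegral_congr_fun measurableSet_Ioo fun s hs =>
      (setIntegral_fracKernel_mul hs.1 hs.2.le p).symm
  rw [h1, integral_integral_swap (integrable_fracKernel_id ha hb hp hpi)]
  refine setIntegral_congr_fun measurableSet_Ioo fun τ hτ => ?_
  rw [integral_mul_const, integral_fracKernel ha hb hτ.1.le hτ.2]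
  ring

lemma rlInt_rlInt {a b t : ℝ} (ha : 0 < a) (hb : 0 < b) (ht : 0 ≤ t) {p : ℝ → ℝ}
    (hp : AEStronglyMeasurable p (volume.restrict (Set.Ioo 0 t)))
    (hpi : IntegrableOn (fun τ => (t - τ) ^ (a + b - 1) * p τ) (Set.Ioo 0 t)) :
    rlInt a (rlInt b p) t = rlInt (a + b) p t := by
  have h := integral_iterated ha hb ht hp hpi
  unfold rlInt
  have h2 : ∀ s, (t - s) ^ (a - 1) * (1 / Real.Gamma b * ∫ τ in (0:ℝ)..s, (s - τ) ^ (b - 1) * p τ)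
      = 1 / Real.Gamma b *
        ((t - s) ^ (a - 1) * ∫ τ in (0:ℝ)..s, (s - τ) ^ (b - 1) * p τ) := fun s => by ring
  simp_rw [h2]
  rw [intervalIntegral.integral_const_mul, h, ProbabilityTheory.beta]
  have := (Real.Gamma_pos_of_pos ha).ne'
  have := (Real.Gamma_pos_of_pos hb).ne'
  field_simp

/-! ### Mittag-Leffler series -/

/-- `Γ` grows faster than any exponential: bound the Euler integral below by its part over
`[R, R + 1]`. -/
lemma Gamma_lower_bound {R x : ℝ} (hR : 0 < R) (hx : 1 ≤ x) :
    R ^ (x - 1) * Real.exp (-(R + 1)) ≤ Real.Gamma x := by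
  rw [Real.Gamma_eq_integral (by linarith)]
  have hintg := Real.GammaIntegral_convergent (s := x) (by linarith)
  have hsub : Set.Ioc R (R + 1) ⊆ Set.Ioi 0 := fun y hy => hR.trans hy.1
  calc R ^ (x - 1) * Real.exp (-(R + 1))
      = ∫ _y in Set.Ioc R (R + 1), R ^ (x - 1) * Real.exp (-(R + 1)) := by simp
    _ ≤ ∫ y in Set.Ioc R (R + 1), Real.exp (-y) * y ^ (x - 1) := by
        refine setIntegral_mono_on (integrableOn_const (by simp))
          (hintg.mono_set hsub) measurableSet_Ioc ?_
        intro y hy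
        rw [mul_comm]
        exact mul_le_mul (Real.exp_le_exp.2 (by linarith [hy.2]))
          (Real.rpow_le_rpow hR.le hy.1.le (by linarith)) (by positivity) (by positivity)
    _ ≤ ∫ y in Set.Ioi 0, Real.exp (-y) * y ^ (x - 1) := by
        refine setIntegral_mono_set hintg ?_ (Filter.Eventually.of_forall hsub)
        refine ae_restrict_of_forall_mem measurableSet_Ioi fun y hy => ?_
        have : (0:ℝ) < y := hy
        simp only [Pi.zero_apply]
        positivity

lemma summable_mittagLeffler {α μ z : ℝ} (hα : 0 < α) (hz : 0 ≤ z) :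
    Summable (fun k : ℕ => z ^ k / Real.Gamma (α * k + μ)) := by
  -- `R ^ α` exceeds `z`, so the series is eventually dominated by a geometric one
  set R : ℝ := (z + 1) ^ (1 / α) with hRdef
  have hR : 0 < R := by positivity
  have hRα : R ^ α = z + 1 := by
    rw [hRdef, ← Real.rpow_mul (by positivity), one_div_mul_cancel hα.ne', Real.rpow_one]
  have hgeo : Summable (fun k : ℕ => R ^ (1 - μ) * Real.exp (R + 1) * (z / (z + 1)) ^ k) := by
    refine (summable_geometric_of_lt_one (by positivity) ?_).mul_left _
    rw [div_lt_one (by positivity)]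
    linarith
  refine Summable.of_norm_bounded_eventually_nat hgeo ?_
  obtain ⟨k0, hk0⟩ := exists_nat_ge ((1 - μ) / α)
  filter_upwards [Filter.eventually_ge_atTop k0] with k hk
  have hx : 1 ≤ α * k + μ := by
    have : (1 - μ) / α ≤ k := hk0.trans (by exact_mod_cast hk)
    rw [div_le_iff₀ hα] at this
    linarith
  have hG := Gamma_lower_bound hR hx
  have hGpos : 0 < Real.Gamma (α * k + μ) := Real.Gamma_pos_of_pos (by linarith)
  rw [Real.norm_of_nonneg (by positivity)]
  rw [div_le_iff₀ hGpos]
  have h1 : R ^ (α * k + μ - 1) = (z + 1) ^ k * R ^ (μ - 1) := by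
    rw [add_sub_assoc, Real.rpow_add hR, Real.rpow_mul hR.le, hRα, Real.rpow_natCast]
  calc z ^ k = R ^ (1 - μ) * Real.exp (R + 1) * (z / (z + 1)) ^ k *
        (R ^ (α * k + μ - 1) * Real.exp (-(R + 1))) := by
        rw [h1, div_pow, Real.exp_neg, show 1 - μ = -(μ - 1) by ring, Real.rpow_neg hR.le]
        have : R ^ (μ - 1) ≠ 0 := (Real.rpow_pos_of_pos hR _).ne'
        have : z + 1 ≠ 0 := by positivity
        field_simp
    _ ≤ _ := by gcongr

/-! ### The fractional Grönwall inequality -/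

lemma integrableOn_sub_rpow {β t : ℝ} (hβ : 0 < β) :
    IntegrableOn (fun s => (t - s) ^ (β - 1)) (Set.Ioo 0 t) := by
  rcases le_or_gt t 0 with h | h
  · rw [Set.Ioo_eq_empty (by linarith)]
    exact integrableOn_empty
  · refine (integrable_fracKernel hβ one_pos le_rfl h).congr_fun (fun s hs => ?_) measurableSet_Ioo
    simp [fracKernel, hs.1]

lemma integrableOn_rlInt_bdd {β t C : ℝ} (hβ : 0 < β) {p : ℝ → ℝ}
    (hp : AEStronglyMeasurable p (volume.restrict (Set.Ioo 0 t)))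
    (hb : ∀ s ∈ Set.Ioo 0 t, |p s| ≤ C) :
    IntegrableOn (fun s => (t - s) ^ (β - 1) * p s) (Set.Ioo 0 t) :=
  (integrableOn_sub_rpow hβ).mul_bdd (c := C) hp
    (ae_restrict_of_forall_mem measurableSet_Ioo hb)

lemma rlInt_eq_setIntegral {β t : ℝ} (ht : 0 ≤ t) (p : ℝ → ℝ) :
    rlInt β p t = (1 / Real.Gamma β) * ∫ s in Set.Ioo 0 t, (t - s) ^ (β - 1) * p s := by
  rw [rlInt, intervalIntegral.integral_of_le ht, integral_Ioc_eq_integral_Ioo]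

lemma rlInt_mono {β t : ℝ} (hβ : 0 < β) (ht : 0 ≤ t) {p q : ℝ → ℝ}
    (hp : IntegrableOn (fun s => (t - s) ^ (β - 1) * p s) (Set.Ioo 0 t))
    (hq : IntegrableOn (fun s => (t - s) ^ (β - 1) * q s) (Set.Ioo 0 t))
    (h : ∀ᵐ s ∂(volume.restrict (Set.Ioo 0 t)), p s ≤ q s) : rlInt β p t ≤ rlInt β q t := by
  rw [rlInt_eq_setIntegral ht, rlInt_eq_setIntegral ht]
  have := Real.Gamma_pos_of_pos hβ
  refine mul_le_mul_of_nonneg_left (integral_mono_ae hp hq ?_) (by positivity)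
  filter_upwards [h, ae_restrict_mem measurableSet_Ioo] with s hs hs'
  exact mul_le_mul_of_nonneg_left hs (rpow_nonneg (by linarith [hs'.2]) _)

lemma rlInt_add {β t : ℝ} (ht : 0 ≤ t) {p q : ℝ → ℝ}
    (hp : IntegrableOn (fun s => (t - s) ^ (β - 1) * p s) (Set.Ioo 0 t))
    (hq : IntegrableOn (fun s => (t - s) ^ (β - 1) * q s) (Set.Ioo 0 t)) :
    rlInt β (fun s => p s + q s) t = rlInt β p t + rlInt β q t := by
  rw [rlInt_eq_setIntegral ht, rlInt_eq_setIntegral ht, rlInt_eq_setIntegral ht, ← mul_add,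
    ← integral_add hp hq]
  simp only [mul_add]

lemma rlInt_const_mul (β t c : ℝ) (p : ℝ → ℝ) :
    rlInt β (fun s => c * p s) t = c * rlInt β p t := by
  unfold rlInt
  rw [show (fun τ => (t - τ) ^ (β - 1) * (c * p τ)) = fun τ => c * ((t - τ) ^ (β - 1) * p τ) by
    ext; ring, intervalIntegral.integral_const_mul]
  ring

lemma rlInt_one {β t : ℝ} (hβ : 0 < β) (ht : 0 < t) :
    rlInt β (fun _ => 1) t = t ^ β / Real.Gamma (β + 1) := by
  have h := integral_beta_kernel hβ one_pos ht
  simp only [sub_self, Real.rpow_zero, sub_zero, add_sub_cancel_right] at h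
  have := (Real.Gamma_pos_of_pos hβ).ne'
  rw [rlInt, h, ProbabilityTheory.beta, Real.Gamma_one]
  field_simp

/-- Fractional integrals of order `α + δ` are dominated by those of order `α`. -/
lemma rlInt_order_mono {α δ t C : ℝ} (hα : 0 < α) (hδ : 0 ≤ δ) (ht : 0 ≤ t) {c : ℝ → ℝ}
    (hc : AEStronglyMeasurable c (volume.restrict (Set.Ioo 0 t)))
    (hc0 : ∀ s ∈ Set.Ioo 0 t, 0 ≤ c s) (hcb : ∀ s ∈ Set.Ioo 0 t, c s ≤ C) :
    rlInt (α + δ) c t ≤ t ^ δ * Real.Gamma α / Real.Gamma (α + δ) * rlInt α c t := by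
  have hb : ∀ s ∈ Set.Ioo 0 t, |c s| ≤ C := fun s hs => by
    rw [abs_of_nonneg (hc0 s hs)]; exact hcb s hs
  have hG := Real.Gamma_pos_of_pos hα
  have hG' := Real.Gamma_pos_of_pos (show 0 < α + δ by linarith)
  rw [rlInt_eq_setIntegral ht, rlInt_eq_setIntegral ht]
  have : ∫ s in Set.Ioo 0 t, (t - s) ^ (α + δ - 1) * c s
      ≤ ∫ s in Set.Ioo 0 t, t ^ δ * ((t - s) ^ (α - 1) * c s) := by
    refine setIntegral_mono_on (integrableOn_rlInt_bdd (by linarith) hc hb)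
      ((integrableOn_rlInt_bdd hα hc hb).const_mul _) measurableSet_Ioo fun s hs => ?_
    have hts : 0 < t - s := by linarith [hs.2]
    rw [show α + δ - 1 = δ + (α - 1) by ring, Real.rpow_add hts, mul_assoc]
    have := hc0 s hs
    gcongr
    linarith [hs.1]
  rw [integral_const_mul] at this
  calc _ ≤ 1 / Real.Gamma (α + δ) *
        (t ^ δ * ∫ s in Set.Ioo 0 t, (t - s) ^ (α - 1) * c s) := by gcongr
    _ = _ := by field_simp

/-- Fractional Grönwall inequality, obtained by iterating the integral inequality and letting
the remainder `lam ^ m * J^(α m) N` tend to `0`. -/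
lemma fractional_gronwall {α lam N0 T M C : ℝ} (hα : 0 < α) (hl : 0 ≤ lam) (hN0 : 0 ≤ N0)
    {N c : ℝ → ℝ}
    (hNm : AEStronglyMeasurable N (volume.restrict (Set.Ioo 0 T)))
    (hcm : AEStronglyMeasurable c (volume.restrict (Set.Ioo 0 T)))
    (hNn : ∀ s ∈ Set.Ioo 0 T, 0 ≤ N s) (hNb : ∀ s ∈ Set.Ioo 0 T, N s ≤ M)
    (hcn : ∀ s ∈ Set.Ioo 0 T, 0 ≤ c s) (hcb : ∀ s ∈ Set.Ioo 0 T, c s ≤ C)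
    (h : ∀ t ∈ Set.Ioc 0 T, N t ≤ N0 + rlInt α (fun s => lam * N s + c s) t)
    {t : ℝ} (ht : t ∈ Set.Ioc 0 T) :
    N t ≤ N0 * mittagLeffler α 1 (lam * t ^ α)
      + Real.Gamma α * mittagLeffler α α (lam * t ^ α) * rlInt α c t := by
  have ht0 := ht.1
  have hsub : Set.Ioo 0 t ⊆ Set.Ioo 0 T := Set.Ioo_subset_Ioo_right ht.2
  have hNm' : AEStronglyMeasurable N (volume.restrict (Set.Ioo 0 t)) := hNm.mono_set hsub
  have hcm' : AEStronglyMeasurable c (volume.restrict (Set.Ioo 0 t)) := hcm.mono_set hsub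
  have hNabs : ∀ s ∈ Set.Ioo 0 t, |N s| ≤ M := fun s hs => by
    rw [abs_of_nonneg (hNn s (hsub hs))]; exact hNb s (hsub hs)
  have hcabs : ∀ s ∈ Set.Ioo 0 t, |c s| ≤ C := fun s hs => by
    rw [abs_of_nonneg (hcn s (hsub hs))]; exact hcb s (hsub hs)
  have hqm : AEStronglyMeasurable (fun s => lam * N s + c s) (volume.restrict (Set.Ioo 0 t)) :=
    (hNm'.const_mul lam).add hcm'
  have hqabs : ∀ s ∈ Set.Ioo 0 t, |lam * N s + c s| ≤ lam * M + C := fun s hs => by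
    refine (abs_add_le _ _).trans (add_le_add ?_ (hcabs s hs))
    rw [abs_mul, abs_of_nonneg hl]
    exact mul_le_mul_of_nonneg_left (hNabs s hs) hl
  have hIN : ∀ {β : ℝ}, 0 < β → IntegrableOn (fun s => (t - s) ^ (β - 1) * N s) (Set.Ioo 0 t) :=
    fun {β} hβ => integrableOn_rlInt_bdd hβ hNm' hNabs
  have hIc : ∀ {β : ℝ}, 0 < β → IntegrableOn (fun s => (t - s) ^ (β - 1) * c s) (Set.Ioo 0 t) :=
    fun {β} hβ => integrableOn_rlInt_bdd hβ hcm' hcabs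
  have hIq : ∀ {β : ℝ}, 0 < β →
      IntegrableOn (fun s => (t - s) ^ (β - 1) * (lam * N s + c s)) (Set.Ioo 0 t) :=
    fun {β} hβ => integrableOn_rlInt_bdd hβ hqm hqabs
  have hI1 : ∀ {β : ℝ}, 0 < β → IntegrableOn (fun s => (t - s) ^ (β - 1) * N0) (Set.Ioo 0 t) :=
    fun {β} hβ => (integrableOn_sub_rpow hβ).mul_const _
  have hlin : ∀ {β : ℝ}, 0 < β →
      rlInt β (fun s => lam * N s + c s) t = lam * rlInt β N t + rlInt β c t := by
    intro β hβ
    rw [rlInt_add ht0.le ?_ (hIc hβ), rlInt_const_mul]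
    refine IntegrableOn.congr_fun ((hIN hβ).const_mul lam) (fun s _ => ?_)
      measurableSet_Ioo
    ring
  have hstep : ∀ {β : ℝ}, 0 < β → rlInt β N t ≤ N0 * (t ^ β / Real.Gamma (β + 1))
      + (lam * rlInt (β + α) N t + rlInt (β + α) c t) := by
    intro β hβ
    have hit := integrableOn_iterated hβ hα hqm (hIq (add_pos hβ hα))
    have hit' : IntegrableOn
        (fun s => (t - s) ^ (β - 1) * rlInt α (fun s => lam * N s + c s) s) (Set.Ioo 0 t) := by
      refine IntegrableOn.congr_fun (hit.const_mul (1 / Real.Gamma α)) (fun s _ => ?_)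
        measurableSet_Ioo
      simp only [rlInt]
      ring
    have h1 : rlInt β N t ≤ rlInt β (fun s => N0 + rlInt α (fun s => lam * N s + c s) s) t := by
      refine rlInt_mono hβ ht0.le (hIN hβ) ?_ ?_
      · refine ((hI1 hβ).add hit').congr_fun (fun s _ => ?_)
          measurableSet_Ioo
        simp only [Pi.add_apply]
        ring
      · exact ae_restrict_of_forall_mem measurableSet_Ioo
          fun s hs => h s ⟨hs.1, (hsub hs).2.le⟩
    rw [rlInt_add ht0.le (hI1 hβ) hit', rlInt_rlInt hβ hα ht0.le hqm (hIq (add_pos hβ hα)),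
      hlin (add_pos hβ hα)] at h1
    have h2 : rlInt β (fun _ => N0) t = N0 * (t ^ β / Real.Gamma (β + 1)) := by
      rw [← rlInt_one hβ ht0, ← rlInt_const_mul]
      simp
    rwa [h2] at h1
  have hiter : ∀ m : ℕ, N t ≤
      N0 * ∑ k ∈ Finset.range (m + 1), (lam * t ^ α) ^ k / Real.Gamma (α * k + 1)
      + ∑ k ∈ Finset.range (m + 1), lam ^ k * rlInt (α + α * k) c t
      + lam ^ (m + 1) * rlInt (α + α * m) N t := by
    intro m
    induction m with
    | zero =>
      have := h t ht
      rw [hlin hα] at this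
      simp
      linarith
    | succ m ih =>
      rw [Finset.sum_range_succ _ (m + 1), Finset.sum_range_succ _ (m + 1)]
      have hβ : 0 < α + α * m := by positivity
      have h1 := mul_le_mul_of_nonneg_left (hstep hβ) (pow_nonneg hl (m + 1))
      have e1 : α + α * m = α * ((m + 1 : ℕ) : ℝ) := by push_cast; ring
      have e2 : α + α * m + α = α + α * ((m + 1 : ℕ) : ℝ) := by push_cast; ring
      have e3 : (lam * t ^ α) ^ (m + 1) = lam ^ (m + 1) * t ^ (α + α * m) := by
        rw [mul_pow, e1, Real.rpow_mul ht0.le, Real.rpow_natCast]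
      rw [e2] at h1
      rw [e3, ← e1, pow_succ lam (m + 1)]
      have e4 : lam ^ (m + 1) * (N0 * (t ^ (α + α * m) / Real.Gamma (α + α * m + 1)) +
          (lam * rlInt (α + α * ((m + 1 : ℕ) : ℝ)) N t + rlInt (α + α * ((m + 1 : ℕ) : ℝ)) c t))
          = N0 * (lam ^ (m + 1) * t ^ (α + α * m) / Real.Gamma (α + α * m + 1))
          + lam ^ (m + 1) * rlInt (α + α * ((m + 1 : ℕ) : ℝ)) c t
          + lam ^ (m + 1) * lam * rlInt (α + α * ((m + 1 : ℕ) : ℝ)) N t := by ring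
      rw [← e1] at h1 e4
      linarith
  have hz : 0 ≤ lam * t ^ α := by positivity
  have hs1 := summable_mittagLeffler (μ := 1) hα hz
  have hs2 := summable_mittagLeffler (μ := α) hα hz
  have hJ : 0 ≤ rlInt α c t := by
    rw [rlInt_eq_setIntegral ht0.le]
    have := Real.Gamma_pos_of_pos hα
    refine mul_nonneg (by positivity) (setIntegral_nonneg measurableSet_Ioo fun s hs => ?_)
    exact mul_nonneg (rpow_nonneg (by linarith [hs.2]) _) (hcn s (hsub hs))
  have hA : ∀ m : ℕ, ∑ k ∈ Finset.range (m + 1), (lam * t ^ α) ^ k / Real.Gamma (α * k + 1)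
      ≤ mittagLeffler α 1 (lam * t ^ α) := fun m =>
    hs1.sum_le_tsum _ fun k _ => div_nonneg (by positivity)
      (Real.Gamma_pos_of_pos (by positivity)).le
  have hB : ∀ m : ℕ, ∑ k ∈ Finset.range (m + 1), lam ^ k * rlInt (α + α * k) c t
      ≤ Real.Gamma α * mittagLeffler α α (lam * t ^ α) * rlInt α c t := by
    intro m
    have h1 : ∑ k ∈ Finset.range (m + 1), (lam * t ^ α) ^ k / Real.Gamma (α * k + α)
      ≤ mittagLeffler α α (lam * t ^ α) := hs2.sum_le_tsum _ fun k _ => div_nonneg (by positivity)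
        (Real.Gamma_pos_of_pos (by positivity)).le
    have hG := Real.Gamma_pos_of_pos hα
    calc _ ≤ ∑ k ∈ Finset.range (m + 1), Real.Gamma α *
          ((lam * t ^ α) ^ k / Real.Gamma (α * k + α)) * rlInt α c t := by
          refine Finset.sum_le_sum fun k _ => ?_
          have h2 := mul_le_mul_of_nonneg_left (rlInt_order_mono (δ := α * k) hα (by positivity)
            ht0.le hcm' (fun s hs => hcn s (hsub hs)) (fun s hs => hcb s (hsub hs)))
            (pow_nonneg hl k)
          refine h2.trans (le_of_eq ?_)
          rw [mul_pow, Real.rpow_mul ht0.le, Real.rpow_natCast, add_comm α (α * k)]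
          ring
      _ = Real.Gamma α * (∑ k ∈ Finset.range (m + 1),
          (lam * t ^ α) ^ k / Real.Gamma (α * k + α)) * rlInt α c t := by
          rw [Finset.mul_sum, Finset.sum_mul]
      _ ≤ _ := by gcongr
  have hR : ∀ m : ℕ, lam ^ (m + 1) * rlInt (α + α * m) N t
      ≤ M * ((lam * t ^ α) ^ (m + 1) / Real.Gamma (α * ((m + 1 : ℕ) : ℝ) + 1)) := by
    intro m
    have hβ : 0 < α + α * m := by positivity
    have e1 : α + α * m = α * ((m + 1 : ℕ) : ℝ) := by push_cast; ring
    have h1 : rlInt (α + α * m) N t ≤ rlInt (α + α * m) (fun _ => M * 1) t := by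
      refine rlInt_mono hβ ht0.le (hIN hβ) ?_ ?_
      · exact (integrableOn_sub_rpow hβ).mul_const _
      · exact ae_restrict_of_forall_mem measurableSet_Ioo
          fun s hs => by simpa using hNb s (hsub hs)
    rw [rlInt_const_mul, rlInt_one hβ ht0] at h1
    refine (mul_le_mul_of_nonneg_left h1 (pow_nonneg hl (m + 1))).trans (le_of_eq ?_)
    rw [mul_pow, e1, Real.rpow_mul ht0.le, Real.rpow_natCast]
    ring
  have hlim : Filter.Tendsto (fun m : ℕ =>
      N0 * mittagLeffler α 1 (lam * t ^ α)
      + Real.Gamma α * mittagLeffler α α (lam * t ^ α) * rlInt α c t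
      + M * ((lam * t ^ α) ^ (m + 1) / Real.Gamma (α * ((m + 1 : ℕ) : ℝ) + 1)))
      Filter.atTop (nhds (N0 * mittagLeffler α 1 (lam * t ^ α)
      + Real.Gamma α * mittagLeffler α α (lam * t ^ α) * rlInt α c t + M * 0)) := by
    refine tendsto_const_nhds.add (Filter.Tendsto.const_mul _ ?_)
    exact (hs1.tendsto_atTop_zero).comp (Filter.tendsto_add_atTop_nat 1)
  rw [mul_zero, add_zero] at hlim
  refine ge_of_tendsto' hlim fun m => ?_
  have := mul_le_mul_of_nonneg_left (hA m) hN0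
  linarith [hiter m, hB m, hR m]

/-! ### Caputo derivative: inversion and the energy inequality -/

lemma rlInt_one_sub (α : ℝ) (p : ℝ → ℝ) : rlInt (1 - α) p = caputo α p := by
  ext s
  rw [rlInt, caputo, show 1 - α - 1 = -α by ring]

lemma integrableOn_weight_one {α t : ℝ} {p : ℝ → ℝ} (hp : IntegrableOn p (Set.Ioo 0 t)) :
    IntegrableOn (fun τ => (t - τ) ^ (α + (1 - α) - 1) * p τ) (Set.Ioo 0 t) := by
  refine hp.congr_fun (fun s _ => ?_)
    measurableSet_Ioo
  simp

lemma rlInt_caputo {α t : ℝ} (hα : 0 < α) (hα1 : α < 1) (ht : 0 ≤ t) {p : ℝ → ℝ}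
    (hp : IntegrableOn p (Set.Ioo 0 t)) : rlInt α (caputo α p) t = ∫ τ in (0:ℝ)..t, p τ := by
  rw [← rlInt_one_sub, rlInt_rlInt hα (sub_pos.2 hα1) ht hp.aestronglyMeasurable
    (integrableOn_weight_one hp), rlInt]
  simp

lemma integrableOn_caputo {α t : ℝ} (hα : 0 < α) (hα1 : α < 1) {p : ℝ → ℝ}
    (hp : IntegrableOn p (Set.Ioo 0 t)) :
    IntegrableOn (fun s => (t - s) ^ (α - 1) * caputo α p s) (Set.Ioo 0 t) := by
  have h := integrableOn_iterated hα (sub_pos.2 hα1) hp.aestronglyMeasurable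
    (integrableOn_weight_one hp)
  rw [← rlInt_one_sub]
  refine IntegrableOn.congr_fun (h.const_mul (1 / Real.Gamma (1 - α))) (fun s _ => ?_)
    measurableSet_Ioo
  simp only [rlInt]
  ring

lemma ae_integrableOn_caputo_kernel {α t : ℝ} (hα : 0 < α) (hα1 : α < 1) {p : ℝ → ℝ}
    (hp : IntegrableOn p (Set.Ioo 0 t)) :
    ∀ᵐ s ∂(volume.restrict (Set.Ioo 0 t)),
      IntegrableOn (fun τ => (s - τ) ^ (-α) * p τ) (Set.Ioo 0 s) := by
  have h := (integrable_fracKernel_id hα (sub_pos.2 hα1) hp.aestronglyMeasurable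
    (integrableOn_weight_one hp)).prod_right_ae
  filter_upwards [h, ae_restrict_mem measurableSet_Ioo] with s hs hs'
  have h1 : IntegrableOn (fun τ => fracKernel α (1 - α) t τ s * p τ) (Set.Ioo 0 s) :=
    IntegrableOn.mono_set hs (Set.Ioo_subset_Ioo_right hs'.2.le)
  have hpos : 0 < (t - s) ^ (α - 1) := rpow_pos_of_pos (by linarith [hs'.2]) _
  refine IntegrableOn.congr_fun (h1.const_mul ((t - s) ^ (α - 1))⁻¹) (fun τ hτ => ?_)
    measurableSet_Ioo
  simp only [fracKernel, if_pos hτ.2]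
  rw [show 1 - α - 1 = -α by ring]
  field_simp

/-- Alikhanov's inequality `D^α (v²) ≤ 2 v D^α v` at a point `s`, up to the factor `1/Γ(1-α)`.
The difference of the two sides is minus the integral of `(s-τ)^(-α) ((v - v(s))²)'`, which is at
most the increment of `(s-τ)^(-α) (v - v(s))²` over `[0,s]`, a quantity that is `≤ 0`. -/
lemma alikhanov {α s : ℝ} (hα : 0 < α) (hα1 : α < 1) (hs : 0 < s) {v v' : ℝ → ℝ}
    (hc : ContinuousOn v (Set.Icc 0 s)) (hd : ∀ τ ∈ Set.Ioc 0 s, HasDerivAt v (v' τ) τ)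
    (hi : IntegrableOn (fun τ => (s - τ) ^ (-α) * v' τ) (Set.Ioo 0 s)) :
    ∫ τ in (0:ℝ)..s, (s - τ) ^ (-α) * (2 * v τ * v' τ)
      ≤ 2 * v s * ∫ τ in (0:ℝ)..s, (s - τ) ^ (-α) * v' τ := by
  have hiI : IntegrableOn (fun τ => (s - τ) ^ (-α) * v' τ) (Set.Icc 0 s) :=
    (integrableOn_Icc_iff_integrableOn_Ioo).2 hi
  have hvi : IntegrableOn (fun τ => (s - τ) ^ (-α) * (2 * v τ * v' τ)) (Set.Icc 0 s) := by
    have := hiI.continuousOn_mul (hc.const_smul (2:ℝ)) isCompact_Icc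
    refine this.congr_fun (fun τ _ => ?_) measurableSet_Icc
    simp only [Pi.smul_apply, smul_eq_mul]
    ring
  have hφ : IntegrableOn (fun τ => (s - τ) ^ (-α) * (2 * (v τ - v s) * v' τ)) (Set.Icc 0 s) := by
    refine IntegrableOn.congr_fun (hvi.sub (hiI.const_mul (2 * v s))) (fun τ _ => ?_)
      measurableSet_Icc
    simp only [Pi.sub_apply]
    ring
  have hcont : ContinuousOn (fun τ => (s - τ) ^ (-α) * (v τ - v s) ^ 2) (Set.Icc 0 s) := by
    intro τ hτ
    rcases hτ.2.lt_or_eq with h | h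
    · refine ContinuousWithinAt.mul ?_ (((hc τ hτ).sub continuousWithinAt_const).pow 2)
      exact ((continuousAt_const.sub continuousAt_id).rpow_const
        (Or.inl (sub_pos.2 h).ne')).continuousWithinAt
    · -- at `τ = s` differentiability gives `|v τ - v s| ≤ C |τ - s|`, and `2 - α > 0`
      subst h
      obtain ⟨C, hC⟩ := ((hd τ ⟨hs, le_rfl⟩).isBigO_sub).bound
      have h0 : (τ - τ) ^ (-α) * (v τ - v τ) ^ 2 = 0 := by simp
      rw [ContinuousWithinAt, h0]
      have hlim : Filter.Tendsto (fun r => C ^ 2 * (τ - r) ^ (2 - α))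
          (nhdsWithin τ (Set.Icc 0 τ)) (nhds 0) := by
        have : ContinuousAt (fun r => C ^ 2 * (τ - r) ^ (2 - α)) τ :=
          continuousAt_const.mul ((continuousAt_const.sub continuousAt_id).rpow_const
            (Or.inr (by linarith)))
        have h2 := this.continuousWithinAt (s := Set.Icc 0 τ)
        rw [ContinuousWithinAt] at h2
        simpa [Real.zero_rpow (show 2 - α ≠ 0 by linarith)] using h2
      refine tendsto_of_tendsto_of_tendsto_of_le_of_le' tendsto_const_nhds hlim ?_ ?_
      · filter_upwards [self_mem_nhdsWithin] with r hr
        exact mul_nonneg (rpow_nonneg (by linarith [hr.2]) _) (sq_nonneg _)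
      · filter_upwards [self_mem_nhdsWithin, nhdsWithin_le_nhds hC] with r hr hrC
        rcases hr.2.lt_or_eq with h | h
        · have hpos : 0 < τ - r := by linarith
          rw [Real.norm_eq_abs, Real.norm_eq_abs] at hrC
          have h3 : (v r - v τ) ^ 2 ≤ C ^ 2 * (τ - r) ^ 2 := by
            rw [← sq_abs (v r - v τ)]
            calc |v r - v τ| ^ 2 ≤ (C * |r - τ|) ^ 2 := by gcongr
              _ = C ^ 2 * (τ - r) ^ 2 := by rw [mul_pow, sq_abs]; ring
          calc _ ≤ (τ - r) ^ (-α) * (C ^ 2 * (τ - r) ^ 2) :=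
                mul_le_mul_of_nonneg_left h3 (rpow_nonneg hpos.le _)
            _ = C ^ 2 * (τ - r) ^ (2 - α) := by
                rw [show 2 - α = -α + (2 : ℕ) by push_cast; ring, Real.rpow_add hpos,
                  Real.rpow_natCast]
                ring
        · subst h
          simp [Real.zero_rpow (show 2 - α ≠ 0 by linarith)]
  have hderiv : ∀ τ ∈ Set.Ioo 0 s, HasDerivWithinAt (fun τ => (s - τ) ^ (-α) * (v τ - v s) ^ 2)
      (α * (s - τ) ^ (-α - 1) * (v τ - v s) ^ 2 + (s - τ) ^ (-α) * (2 * (v τ - v s) * v' τ))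
      (Set.Ioi τ) τ := by
    intro τ hτ
    have h1 : HasDerivAt (fun τ => s - τ) (-1) τ := (hasDerivAt_id τ).const_sub s
    have h2 := h1.rpow_const (p := -α) (Or.inl (by linarith [hτ.2]))
    have h3 := ((hd τ ⟨hτ.1, hτ.2.le⟩).sub_const (v s)).pow 2
    refine ((h2.mul h3).congr_deriv ?_).hasDerivWithinAt
    simp only [Pi.pow_apply, Nat.cast_ofNat]
    ring
  have hle := intervalIntegral.integral_le_sub_of_hasDeriv_right_of_le hs.le hcont hderiv hφ
    (fun τ hτ => by
      have : 0 ≤ α * (s - τ) ^ (-α - 1) * (v τ - v s) ^ 2 :=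
        mul_nonneg (mul_nonneg hα.le (rpow_nonneg (by linarith [hτ.2]) _)) (sq_nonneg _)
      linarith)
  have hF0 : 0 ≤ (s - 0) ^ (-α) * (v 0 - v s) ^ 2 :=
    mul_nonneg (rpow_nonneg (by linarith) _) (sq_nonneg _)
  have hFs : (s - s) ^ (-α) * (v s - v s) ^ 2 = 0 := by simp
  have hII : ∀ {q : ℝ → ℝ}, IntegrableOn q (Set.Icc 0 s) → IntervalIntegrable q volume 0 s :=
    fun {q} hq => (intervalIntegrable_iff_integrableOn_Icc_of_le hs.le).2 hq
  have hsplit : ∫ τ in (0:ℝ)..s, (s - τ) ^ (-α) * (2 * (v τ - v s) * v' τ)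
      = (∫ τ in (0:ℝ)..s, (s - τ) ^ (-α) * (2 * v τ * v' τ))
        - 2 * v s * ∫ τ in (0:ℝ)..s, (s - τ) ^ (-α) * v' τ := by
    rw [← intervalIntegral.integral_const_mul, ← intervalIntegral.integral_sub (hII hvi)
      ((hII hiI).const_mul _)]
    congr 1
    ext τ
    ring
  rw [hsplit] at hle
  linarith

/-- Integrated form of Alikhanov's inequality. -/
lemma sq_sub_sq_le_rlInt {α t : ℝ} (hα : 0 < α) (hα1 : α < 1) (ht : 0 < t) {v v' : ℝ → ℝ}
    (hc : ContinuousOn v (Set.Icc 0 t)) (hd : ∀ τ ∈ Set.Ioc 0 t, HasDerivAt v (v' τ) τ)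
    (hi : IntegrableOn v' (Set.Ioo 0 t)) :
    v t ^ 2 - v 0 ^ 2 ≤ rlInt α (fun s => 2 * v s * caputo α v' s) t := by
  have hiI : IntegrableOn v' (Set.Icc 0 t) := (integrableOn_Icc_iff_integrableOn_Ioo).2 hi
  have hpI : IntegrableOn (fun τ => 2 * v τ * v' τ) (Set.Icc 0 t) := by
    refine (hiI.continuousOn_mul (hc.const_smul (2:ℝ)) isCompact_Icc).congr_fun
      (fun τ _ => ?_) measurableSet_Icc
    simp only [Pi.smul_apply, smul_eq_mul]
  have hp : IntegrableOn (fun τ => 2 * v τ * v' τ) (Set.Ioo 0 t) :=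
    hpI.mono_set Set.Ioo_subset_Icc_self
  have hftc : ∫ τ in (0:ℝ)..t, 2 * v τ * v' τ = v t ^ 2 - v 0 ^ 2 := by
    refine intervalIntegral.integral_eq_sub_of_hasDerivAt_of_le (f := fun τ => v τ ^ 2) ht.le
      (hc.pow 2) (fun τ hτ => ?_) ((intervalIntegrable_iff_integrableOn_Icc_of_le ht.le).2 hpI)
    have := (hd τ ⟨hτ.1, hτ.2.le⟩).pow 2
    refine this.congr_deriv ?_
    simp
  rw [← hftc, ← rlInt_caputo hα hα1 ht.le hp]
  refine rlInt_mono hα ht.le (integrableOn_caputo hα hα1 hp) ?_ ?_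
  · obtain ⟨C, hC⟩ := isCompact_Icc.exists_bound_of_continuousOn hc
    have hvm : AEStronglyMeasurable v (volume.restrict (Set.Ioo 0 t)) :=
      (hc.mono Set.Ioo_subset_Icc_self).aestronglyMeasurable measurableSet_Ioo
    have := ((integrableOn_caputo hα hα1 hi).mul_bdd (c := C) hvm
      (ae_restrict_of_forall_mem measurableSet_Ioo
        fun s hs => hC s (Set.Ioo_subset_Icc_self hs))).const_mul 2
    refine IntegrableOn.congr_fun this (fun s _ => ?_)
      measurableSet_Ioo
    ring
  · filter_upwards [ae_integrableOn_caputo_kernel hα hα1 hi, ae_restrict_mem measurableSet_Ioo]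
      with s hs hs'
    have h1 := alikhanov hα hα1 hs'.1 (hc.mono (Set.Icc_subset_Icc_right hs'.2.le))
      (fun τ hτ => hd τ ⟨hτ.1, hτ.2.trans hs'.2.le⟩) hs
    have hG := Real.Gamma_pos_of_pos (sub_pos.2 hα1)
    unfold caputo
    have h2 := mul_le_mul_of_nonneg_left h1 (show 0 ≤ 1 / Real.Gamma (1 - α) by positivity)
    linarith

/-! ### Energy inequality with spatial variables -/

/-- The integrand `(t-s)^(α-1) * 2 u D^α u` of the fractional integral of the energy is integrable
jointly in time and space, because `∂ₜu` is. -/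
lemma integrable_energy {Z : Type*} [MeasurableSpace Z] {μ : Measure Z} [SFinite μ]
    {α t C : ℝ} (hα : 0 < α) (hα1 : α < 1) {u ut : ℝ → Z → ℝ}
    (hum : AEStronglyMeasurable (fun q : ℝ × Z => u q.1 q.2)
      ((volume.restrict (Set.Ioo 0 t)).prod μ))
    (hub : ∀ᵐ q ∂((volume.restrict (Set.Ioo 0 t)).prod μ), |u q.1 q.2| ≤ C)
    (hi : Integrable (fun q : ℝ × Z => ut q.1 q.2) ((volume.restrict (Set.Ioo 0 t)).prod μ)) :
    Integrable (fun q : ℝ × Z => (t - q.1) ^ (α - 1) *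
      (2 * u q.1 q.2 * caputo α (fun s => ut s q.2) q.1))
      ((volume.restrict (Set.Ioo 0 t)).prod μ) := by
  set ν : Measure ℝ := volume.restrict (Set.Ioo 0 t) with hν
  have hmem : ∀ᵐ q ∂(ν.prod μ), q.1 ∈ Set.Ioo 0 t :=
    Measure.quasiMeasurePreserving_fst.ae (ae_restrict_mem measurableSet_Ioo)
  have h1 : Integrable (fun q : ℝ × (ℝ × Z) => fracKernel α (1 - α) t q.2.1 q.1 * ut q.2.1 q.2.2)
      (ν.prod (ν.prod μ)) := by
    refine integrable_fracKernel_mul (Y := ℝ × Z) (θ := Prod.fst)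
      (p := fun y => ut y.1 y.2) hα (sub_pos.2 hα1) measurable_fst hmem hi.aestronglyMeasurable ?_
    refine hi.congr (Filter.Eventually.of_forall fun q => ?_)
    simp
  have hmp : MeasurePreserving (fun q : (ℝ × Z) × ℝ => (q.1.1, (q.2, q.1.2)))
      ((ν.prod μ).prod ν) (ν.prod (ν.prod μ)) :=
    ((MeasurePreserving.id ν).prod Measure.measurePreserving_swap).comp
      (measurePreserving_prodAssoc ν μ ν)
  have h2 := ((hmp.integrable_comp h1.aestronglyMeasurable).2 h1).integral_prod_left
  have h3 := (h2.mul_bdd (c := C) hum (by simpa using hub)).const_mul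
    (2 * (1 / Real.Gamma (1 - α)))
  refine h3.congr ?_
  filter_upwards [hmem] with q hq
  have h4 := setIntegral_fracKernel_mul (a := α) (b := 1 - α) hq.1 hq.2.le (fun s => ut s q.2)
  simp only [Function.comp] at h4 ⊢
  rw [hν, h4, caputo, show 1 - α - 1 = -α by ring]
  ring

/-- Energy inequality: `‖u(t)‖² - ‖u(0)‖² ≤ J^α (∫ 2 u D^α u) (t)`. -/
lemma energy_le_rlInt {Z : Type*} [MeasurableSpace Z] {μ : Measure Z} [IsFiniteMeasure μ]
    {α t C : ℝ} (hα : 0 < α) (hα1 : α < 1) (ht : 0 < t) {u ut : ℝ → Z → ℝ}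
    (hum : AEStronglyMeasurable (fun q : ℝ × Z => u q.1 q.2)
      ((volume.restrict (Set.Ioo 0 t)).prod μ))
    (hub : ∀ᵐ q ∂((volume.restrict (Set.Ioo 0 t)).prod μ), |u q.1 q.2| ≤ C)
    (h0i : Integrable (fun z => u 0 z ^ 2) μ) (hti : Integrable (fun z => u t z ^ 2) μ)
    (hc : ∀ᵐ z ∂μ, ContinuousOn (fun s => u s z) (Set.Icc 0 t))
    (hd : ∀ᵐ z ∂μ, ∀ s ∈ Set.Ioc 0 t, HasDerivAt (fun s => u s z) (ut s z) s)
    (hi : Integrable (fun q : ℝ × Z => ut q.1 q.2) ((volume.restrict (Set.Ioo 0 t)).prod μ)) :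
    (∫ z, u t z ^ 2 ∂μ) - (∫ z, u 0 z ^ 2 ∂μ)
      ≤ rlInt α (fun s => ∫ z, 2 * u s z * caputo α (fun r => ut r z) s ∂μ) t := by
  have hE := integrable_energy hα hα1 hum hub hi
  rw [← integral_sub hti h0i, rlInt_eq_setIntegral ht.le]
  have h1 : ∫ s in Set.Ioo 0 t, (t - s) ^ (α - 1) *
        ∫ z, 2 * u s z * caputo α (fun r => ut r z) s ∂μ
      = ∫ z, (∫ s in Set.Ioo 0 t, (t - s) ^ (α - 1) *
        (2 * u s z * caputo α (fun r => ut r z) s)) ∂μ := by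
    rw [← integral_integral_swap hE]
    simp only [integral_const_mul]
  rw [h1, ← integral_const_mul]
  refine integral_mono_ae (hti.sub h0i) (hE.integral_prod_right.const_mul _) ?_
  filter_upwards [hc, hd, hi.prod_left_ae] with z hcz hdz hiz
  have := sq_sub_sq_le_rlInt hα hα1 ht hcz hdz hiz
  rwa [rlInt_eq_setIntegral ht.le] at this

lemma ae_integrable_energy {Z : Type*} [MeasurableSpace Z] {μ : Measure Z} [SFinite μ]
    {α t C : ℝ} (hα : 0 < α) (hα1 : α < 1) {u ut : ℝ → Z → ℝ}
    (hum : AEStronglyMeasurable (fun q : ℝ × Z => u q.1 q.2)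
      ((volume.restrict (Set.Ioo 0 t)).prod μ))
    (hub : ∀ᵐ q ∂((volume.restrict (Set.Ioo 0 t)).prod μ), |u q.1 q.2| ≤ C)
    (hi : Integrable (fun q : ℝ × Z => ut q.1 q.2) ((volume.restrict (Set.Ioo 0 t)).prod μ)) :
    ∀ᵐ s ∂(volume.restrict (Set.Ioo 0 t)),
      Integrable (fun z => u s z * caputo α (fun r => ut r z) s) μ := by
  filter_upwards [(integrable_energy hα hα1 hum hub hi).prod_right_ae,
    ae_restrict_mem measurableSet_Ioo] with s hs hs'
  have hpos : 0 < (t - s) ^ (α - 1) := rpow_pos_of_pos (by linarith [hs'.2]) _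
  refine (hs.const_mul (((t - s) ^ (α - 1))⁻¹ / 2)).congr (Filter.Eventually.of_forall fun z => ?_)
  simp only
  field_simp

lemma integrableOn_energy {Z : Type*} [MeasurableSpace Z] {μ : Measure Z} [SFinite μ]
    {α t C : ℝ} (hα : 0 < α) (hα1 : α < 1) {u ut : ℝ → Z → ℝ}
    (hum : AEStronglyMeasurable (fun q : ℝ × Z => u q.1 q.2)
      ((volume.restrict (Set.Ioo 0 t)).prod μ))
    (hub : ∀ᵐ q ∂((volume.restrict (Set.Ioo 0 t)).prod μ), |u q.1 q.2| ≤ C)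
    (hi : Integrable (fun q : ℝ × Z => ut q.1 q.2) ((volume.restrict (Set.Ioo 0 t)).prod μ)) :
    IntegrableOn (fun s => (t - s) ^ (α - 1) *
      ∫ z, 2 * u s z * caputo α (fun r => ut r z) s ∂μ) (Set.Ioo 0 t) := by
  refine (integrable_energy hα hα1 hum hub hi).integral_prod_left.congr
    (Filter.Eventually.of_forall fun s => ?_)
  simp only [integral_const_mul]

/-! ### The estimate on a slice `x = const` -/

lemma l2sq_nonneg (p : ℝ → ℝ) : 0 ≤ l2sq p := integral_nonneg fun _ => sq_nonneg _

lemma integrableOn_Ioo_of_continuousOn {p : ℝ → ℝ} (hp : ContinuousOn p (Set.Icc 0 π)) :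
    IntegrableOn p (Set.Ioo 0 π) :=
  (hp.integrableOn_Icc).mono_set Set.Ioo_subset_Icc_self

/-- Cauchy–Schwarz in `L²(0,π)`, from the discriminant of `r ↦ ‖p r + q‖²`. -/
lemma abs_l2ip_le {p q : ℝ → ℝ} (hp : ContinuousOn p (Set.Icc 0 π))
    (hq : ContinuousOn q (Set.Icc 0 π)) :
    |l2ip p q| ≤ Real.sqrt (l2sq p) * Real.sqrt (l2sq q) := by
  have hpp : IntegrableOn (fun y => p y ^ 2) (Set.Ioo 0 π) :=
    integrableOn_Ioo_of_continuousOn (hp.pow 2)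
  have hqq : IntegrableOn (fun y => q y ^ 2) (Set.Ioo 0 π) :=
    integrableOn_Ioo_of_continuousOn (hq.pow 2)
  have hpq : IntegrableOn (fun y => p y * q y) (Set.Ioo 0 π) :=
    integrableOn_Ioo_of_continuousOn (hp.mul hq)
  have h : ∀ r : ℝ, 0 ≤ l2sq p * (r * r) + (2 * l2ip p q) * r + l2sq q := by
    intro r
    have h1 : l2sq p * (r * r) + (2 * l2ip p q) * r + l2sq q
        = ∫ y in Set.Ioo 0 π, (p y * r + q y) ^ 2 := by
      have e : ∀ y, (p y * r + q y) ^ 2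
          = ((r * r) * (p y) ^ 2 + (2 * r) * (p y * q y)) + (q y) ^ 2 := fun y => by ring
      simp_rw [e]
      have hsum : IntegrableOn (fun y => (r * r) * (p y) ^ 2 + (2 * r) * (p y * q y))
          (Set.Ioo 0 π) := (hpp.const_mul _).add (hpq.const_mul _)
      rw [integral_add hsum hqq,
        integral_add (hpp.const_mul _) (hpq.const_mul _), integral_const_mul, integral_const_mul]
      unfold l2sq l2ip
      ring
    rw [h1]
    exact integral_nonneg fun y => sq_nonneg _
  have hdisc := discrim_le_zero h
  rw [discrim] at hdisc
  rw [← Real.sqrt_mul (l2sq_nonneg p)]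
  refine Real.abs_le_sqrt ?_
  nlinarith

/-- Young's inequality, scaled so that every product carries the factor `P = a fM V`. -/
lemma young_step {a b d W V fM ℓ : ℝ} (A : ℝ) (hV : 0 < V) :
    a * b + ℓ * a ^ 2 + a * fM * (|A| + (b * W + ℓ * a * W) + d * V)
      ≤ (ℓ ^ 2 * W ^ 2 / V ^ 2 + 3 / 2 * fM ^ 2 * V ^ 2 + ℓ + 1 / 2) * a ^ 2 +
        1 / 2 * ((1 + 2 * W ^ 2 / V ^ 2) * b ^ 2 + A ^ 2 / V ^ 2) + d ^ 2 := by
  obtain ⟨P, hP⟩ : ∃ P, P = a * fM * V := ⟨_, rfl⟩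
  obtain ⟨Q, hQ⟩ : ∃ Q, Q = |A| / V := ⟨_, rfl⟩
  obtain ⟨R, hR⟩ : ∃ R, R = b * W / V := ⟨_, rfl⟩
  obtain ⟨S, hS⟩ : ∃ S, S = ℓ * a * W / V := ⟨_, rfl⟩
  have e1 : a * fM * (|A| + (b * W + ℓ * a * W) + d * V) = P * Q + P * R + P * S + P * d := by
    rw [hP, hQ, hR, hS]; field_simp; ring
  have e2 : (ℓ ^ 2 * W ^ 2 / V ^ 2 + 3 / 2 * fM ^ 2 * V ^ 2 + ℓ + 1 / 2) * a ^ 2 +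
      1 / 2 * ((1 + 2 * W ^ 2 / V ^ 2) * b ^ 2 + A ^ 2 / V ^ 2) + d ^ 2
      = S ^ 2 + 3 / 2 * P ^ 2 + ℓ * a ^ 2 + 1 / 2 * a ^ 2 + 1 / 2 * b ^ 2 + R ^ 2
        + 1 / 2 * Q ^ 2 + d ^ 2 := by
    rw [hP, hQ, hR, hS, div_pow |A|, sq_abs]; field_simp; ring
  rw [e2, e1]
  linarith [sq_nonneg (a - b), sq_nonneg (P - Q), sq_nonneg (P / 2 - R), sq_nonneg (P / 2 - S),
    sq_nonneg (P / 2 - d), sq_nonneg P]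

/-- The energy estimate on a slice: Lipschitz and Young inequalities absorb the coefficient `h`
into `‖U‖²`, `‖g0‖²`, `A²` and the single term `‖U'‖²`. -/
lemma slice_estimate {fM ℓ A : ℝ} {U U' gU g0 F w w' : ℝ → ℝ}
    (hU : ContinuousOn U (Set.Icc 0 π)) (hU' : ContinuousOn U' (Set.Icc 0 π))
    (hgU : ContinuousOn gU (Set.Icc 0 π)) (hg0 : ContinuousOn g0 (Set.Icc 0 π))
    (hF : ContinuousOn F (Set.Icc 0 π)) (hw : ContinuousOn w (Set.Icc 0 π))
    (hw' : ContinuousOn w' (Set.Icc 0 π)) (hpos : 0 < l2sq w') (hfM : 0 < fM) (hℓ : 0 < ℓ)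
    (hI : l2ip F w ≠ 0)
    (hFb : ∀ y ∈ Set.Icc (0:ℝ) π, |F y| ≤ (fM / Real.sqrt π) * |l2ip F w|)
    (hgb : ∀ y ∈ Set.Icc (0:ℝ) π, |gU y - g0 y| ≤ ℓ * |U y|) :
    ∫ y in Set.Ioo 0 π, U y * (gU y + F y * ((A - l2ip gU w + l2ip U' w') / l2ip F w))
      ≤ (ℓ ^ 2 * l2sq w / l2sq w' + (3 / 2) * fM ^ 2 * l2sq w' + ℓ + 1 / 2) * l2sq U
        + (1 / 2) * ((1 + 2 * l2sq w / l2sq w') * l2sq g0 + A ^ 2 / l2sq w') + l2sq U' := by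
  set X := A - l2ip gU w + l2ip U' w' with hX
  set a := Real.sqrt (l2sq U) with ha
  set b := Real.sqrt (l2sq g0) with hb
  set d := Real.sqrt (l2sq U') with hd
  set W := Real.sqrt (l2sq w) with hW
  set V := Real.sqrt (l2sq w') with hV
  have ea : l2sq U = a ^ 2 := (Real.sq_sqrt (l2sq_nonneg _)).symm
  have eb : l2sq g0 = b ^ 2 := (Real.sq_sqrt (l2sq_nonneg _)).symm
  have ed : l2sq U' = d ^ 2 := (Real.sq_sqrt (l2sq_nonneg _)).symm
  have eW : l2sq w = W ^ 2 := (Real.sq_sqrt (l2sq_nonneg _)).symm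
  have eV : l2sq w' = V ^ 2 := (Real.sq_sqrt (l2sq_nonneg _)).symm
  have ha0 : 0 ≤ a := Real.sqrt_nonneg _
  have hb0 : 0 ≤ b := Real.sqrt_nonneg _
  have hd0 : 0 ≤ d := Real.sqrt_nonneg _
  have hW0 : 0 ≤ W := Real.sqrt_nonneg _
  have hV0 : 0 < V := Real.sqrt_pos.2 hpos
  have iUg : IntegrableOn (fun y => U y * gU y) (Set.Ioo 0 π) :=
    integrableOn_Ioo_of_continuousOn (hU.mul hgU)
  have iUg0 : IntegrableOn (fun y => U y * g0 y) (Set.Ioo 0 π) :=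
    integrableOn_Ioo_of_continuousOn (hU.mul hg0)
  have iUF : IntegrableOn (fun y => U y * F y) (Set.Ioo 0 π) :=
    integrableOn_Ioo_of_continuousOn (hU.mul hF)
  have iUU : IntegrableOn (fun y => U y ^ 2) (Set.Ioo 0 π) :=
    integrableOn_Ioo_of_continuousOn (hU.pow 2)
  have hsub : ContinuousOn (fun y => gU y - g0 y) (Set.Icc 0 π) := hgU.sub hg0
  have ig0w : IntegrableOn (fun y => g0 y * w y) (Set.Ioo 0 π) :=
    integrableOn_Ioo_of_continuousOn (hg0.mul hw)
  have isubw : IntegrableOn (fun y => (gU y - g0 y) * w y) (Set.Ioo 0 π) :=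
    integrableOn_Ioo_of_continuousOn (hsub.mul hw)
  have hsplit : ∫ y in Set.Ioo 0 π, U y * (gU y + F y * (X / l2ip F w))
      = l2ip U gU + l2ip U F * (X / l2ip F w) := by
    have e : ∀ y, U y * (gU y + F y * (X / l2ip F w))
        = U y * gU y + (U y * F y) * (X / l2ip F w) := fun y => by ring
    simp_rw [e]
    rw [integral_add iUg (iUF.mul_const _), integral_mul_const]
    rfl
  have h1 : l2ip U gU ≤ a * b + ℓ * a ^ 2 := by
    have h2 : l2ip U gU ≤ l2ip U g0 + ℓ * l2sq U := by
      unfold l2ip l2sq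
      rw [← integral_const_mul, ← integral_add iUg0 (iUU.const_mul _)]
      refine setIntegral_mono_on iUg (iUg0.add (iUU.const_mul _)) measurableSet_Ioo fun y hy => ?_
      have h3 := hgb y (Set.Ioo_subset_Icc_self hy)
      have h4 : U y * (gU y - g0 y) ≤ |U y| * (ℓ * |U y|) :=
        (le_abs_self _).trans (by rw [abs_mul]; gcongr)
      have h5 : |U y| * (ℓ * |U y|) = ℓ * U y ^ 2 := by rw [← sq_abs]; ring
      linarith
    have h3 := (le_abs_self _).trans (abs_l2ip_le hU hg0)
    rw [ea] at h2
    linarith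
  have h2 : |l2ip gU w| ≤ b * W + ℓ * a * W := by
    have e : l2ip gU w = l2ip g0 w + l2ip (fun y => gU y - g0 y) w := by
      unfold l2ip
      rw [← integral_add ig0w isubw]
      congr 1
      ext y
      ring
    have h3 : Real.sqrt (l2sq (fun y => gU y - g0 y)) ≤ ℓ * a := by
      rw [Real.sqrt_le_left (by positivity), mul_pow, ← ea]
      unfold l2sq
      rw [← integral_const_mul]
      refine setIntegral_mono_on (integrableOn_Ioo_of_continuousOn (hsub.pow 2))
        (iUU.const_mul _) measurableSet_Ioo fun y hy => ?_
      have h3 := hgb y (Set.Ioo_subset_Icc_self hy)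
      calc (gU y - g0 y) ^ 2 = |gU y - g0 y| ^ 2 := (sq_abs _).symm
        _ ≤ (ℓ * |U y|) ^ 2 := by gcongr
        _ = ℓ ^ 2 * U y ^ 2 := by rw [mul_pow, sq_abs]
    rw [e]
    refine (abs_add_le _ _).trans (add_le_add (abs_l2ip_le hg0 hw) ?_)
    exact (abs_l2ip_le hsub hw).trans (by gcongr)
  have h3 : |l2ip U' w'| ≤ d * V := abs_l2ip_le hU' hw'
  have hXb : |X| ≤ |A| + (b * W + ℓ * a * W) + d * V := by
    rw [hX]
    refine (abs_add_le _ _).trans (add_le_add ?_ h3)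
    exact (abs_sub _ _).trans (add_le_add le_rfl h2)
  have h4 : |l2ip U F| ≤ a * (fM * |l2ip F w|) := by
    refine (abs_l2ip_le hU hF).trans (mul_le_mul_of_nonneg_left ?_ ha0)
    rw [Real.sqrt_le_left (by positivity)]
    have h5 : l2sq F ≤ ∫ _y in Set.Ioo (0:ℝ) π, ((fM / Real.sqrt π) * |l2ip F w|) ^ 2 := by
      refine setIntegral_mono_on (integrableOn_Ioo_of_continuousOn (hF.pow 2))
        (integrableOn_const (by simp)) measurableSet_Ioo fun y hy => ?_
      rw [← sq_abs (F y)]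
      have := hFb y (Set.Ioo_subset_Icc_self hy)
      gcongr
    refine h5.trans (le_of_eq ?_)
    rw [setIntegral_const]
    simp only [measureReal_def, Real.volume_Ioo, sub_zero, smul_eq_mul]
    rw [ENNReal.toReal_ofReal Real.pi_pos.le, mul_pow, div_pow, Real.sq_sqrt Real.pi_pos.le]
    have := Real.pi_pos
    field_simp
  have h5 : l2ip U F * (X / l2ip F w) ≤ a * fM * |X| := by
    refine (le_abs_self _).trans ?_
    rw [abs_mul, abs_div]
    have hIpos : 0 < |l2ip F w| := abs_pos.2 hI
    calc |l2ip U F| * (|X| / |l2ip F w|) ≤ a * (fM * |l2ip F w|) * (|X| / |l2ip F w|) := by gcongr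
      _ = a * fM * |X| := by field_simp
  have h6 : a * fM * |X| ≤ a * fM * (|A| + (b * W + ℓ * a * W) + d * V) := by gcongr
  rw [hsplit, ea, eb, ed, eW, eV]
  exact (add_le_add h1 (h5.trans h6)).trans (young_step A hV0)

/-! ### Integration by parts in space -/

lemma integral_mul_second_deriv {E : Type*} [NormedAddCommGroup E] [NormedSpace ℝ E]
    [FiniteDimensional ℝ E] [MeasurableSpace E] [BorelSpace E] {μ : Measure E}
    [μ.IsAddHaarMeasure] {W : E → ℝ} (hW : ContDiff ℝ 2 W) (hs : HasCompactSupport W) (e : E) :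
    Integrable (fun p => W p * fderiv ℝ (fun q => fderiv ℝ W q e) p e) μ ∧
    Integrable (fun p => (fderiv ℝ W p e) ^ 2) μ ∧
    ∫ p, W p * fderiv ℝ (fun q => fderiv ℝ W q e) p e ∂μ = - ∫ p, (fderiv ℝ W p e) ^ 2 ∂μ := by
  have h1 : ContDiff ℝ 1 (fun q => fderiv ℝ W q e) :=
    (hW.fderiv_right (m := 1) (by norm_num)).clm_apply contDiff_const
  have hc1 : Continuous (fun q => fderiv ℝ W q e) := h1.continuous
  have hc2 : Continuous (fun p => fderiv ℝ (fun q => fderiv ℝ W q e) p e) :=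
    (h1.continuous_fderiv one_ne_zero).clm_apply continuous_const
  have hs1 : HasCompactSupport (fun q => fderiv ℝ W q e) := hs.fderiv_apply ℝ e
  have i1 : Integrable (fun p => W p * fderiv ℝ (fun q => fderiv ℝ W q e) p e) μ :=
    (hW.continuous.mul hc2).integrable_of_hasCompactSupport hs.mul_right
  have i2 : Integrable (fun p => fderiv ℝ W p e * fderiv ℝ W p e) μ :=
    (hc1.mul hc1).integrable_of_hasCompactSupport hs1.mul_right
  have i3 : Integrable (fun p => W p * fderiv ℝ W p e) μ :=
    (hW.continuous.mul hc1).integrable_of_hasCompactSupport hs.mul_right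
  refine ⟨i1, by simpa only [sq] using i2, ?_⟩
  rw [integral_mul_fderiv_eq_neg_fderiv_mul_of_integrable i2 i1 i3
    (fun x _ => hW.differentiable two_ne_zero x) (fun x _ => h1.differentiable one_ne_zero x)]
  simp only [sq]

lemma iteratedDeriv_two_comp {E : Type*} [NormedAddCommGroup E] [NormedSpace ℝ E]
    {W : E → ℝ} (hW : ContDiff ℝ 2 W) {c : ℝ → E} {e : E} (hc : ∀ s, HasDerivAt c e s) (s : ℝ) :
    iteratedDeriv 2 (fun r => W (c r)) s = fderiv ℝ (fun q => fderiv ℝ W q e) (c s) e := by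
  have h1 : ContDiff ℝ 1 (fun q => fderiv ℝ W q e) :=
    (hW.fderiv_right (m := 1) (by norm_num)).clm_apply contDiff_const
  have hd : deriv (fun r => W (c r)) = fun r => fderiv ℝ W (c r) e := by
    ext r
    exact ((hW.differentiable two_ne_zero (c r)).hasFDerivAt.comp_hasDerivAt r (hc r)).deriv
  rw [iteratedDeriv_succ, iteratedDeriv_one, hd]
  exact ((h1.differentiable one_ne_zero (c s)).hasFDerivAt.comp_hasDerivAt s (hc s)).deriv

lemma contDiff_of_compact_support {E : Type*} [NormedAddCommGroup E] [NormedSpace ℝ E]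
    {W : E → ℝ} {D K : Set E} (hD : IsOpen D) (hK : IsCompact K) (hKD : K ⊆ D)
    (hW : ContDiffOn ℝ 2 W D) (h0 : ∀ p ∉ K, W p = 0) : ContDiff ℝ 2 W := by
  rw [contDiff_iff_contDiffAt]
  intro p
  by_cases hp : p ∈ K
  · exact hW.contDiffAt (hD.mem_nhds (hKD hp))
  · have : W =ᶠ[nhds p] fun _ => 0 := by
      filter_upwards [hK.isClosed.isOpen_compl.mem_nhds hp] with q hq using h0 q hq
    exact contDiffAt_const.congr_of_eventuallyEq this

/-- The energy estimate at a fixed time: testing the equation with `U` itself and integrating by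
parts, the `x`-part of the Laplacian has a sign, and the `y`-part absorbs the term `‖U_y‖²` left
over by the slice estimate. -/
lemma spatial_estimate {n : ℕ} {G : Set (Fin n → ℝ)} (hG : IsOpen G)
    {U cap rhs : (Fin n → ℝ) → ℝ → ℝ} {K : Set ((Fin n → ℝ) × ℝ)} (hK : IsCompact K)
    (hKD : K ⊆ G ×ˢ Set.Ioo 0 π)
    (hU : ContDiffOn ℝ 2 (fun p : (Fin n → ℝ) × ℝ => U p.1 p.2) (G ×ˢ Set.Ioo 0 π))
    (h0 : ∀ p : (Fin n → ℝ) × ℝ, p ∉ K → U p.1 p.2 = 0) {L : ℝ} {B : (Fin n → ℝ) → ℝ}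
    (hcap : Integrable (fun z : (Fin n → ℝ) × ℝ => U z.1 z.2 * cap z.1 z.2)
      (volume.restrict (G ×ˢ Set.Ioo 0 π)))
    (hPDE : ∀ x ∈ G, ∀ y ∈ Set.Ioo (0:ℝ) π,
      cap x y - (∑ i, iteratedDeriv 2 (fun s => U (Function.update x i s) y) (x i))
        - iteratedDeriv 2 (U x) y = rhs x y)
    (hB : IntegrableOn B G)
    (hslice : ∀ x ∈ G, ∫ y in Set.Ioo (0:ℝ) π, U x y * rhs x y
      ≤ L * l2sq (U x) + B x + l2sq (fun y => deriv (U x) y)) :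
    ∫ z in G ×ˢ Set.Ioo (0:ℝ) π, U z.1 z.2 * cap z.1 z.2
      ≤ L * (∫ x in G, ∫ y in Set.Ioo (0:ℝ) π, (U x y) ^ 2) + ∫ x in G, B x := by
  set W : (Fin n → ℝ) × ℝ → ℝ := fun p => U p.1 p.2 with hWdef
  have hDo : IsOpen (G ×ˢ Set.Ioo (0:ℝ) π) := hG.prod isOpen_Ioo
  have hDm : MeasurableSet (G ×ˢ Set.Ioo (0:ℝ) π) := hDo.measurableSet
  have hW : ContDiff ℝ 2 W := contDiff_of_compact_support hDo hK hKD hU h0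
  have hs : HasCompactSupport W := HasCompactSupport.intro hK fun p hp => h0 p hp
  have hWoff : ∀ p ∉ G ×ˢ Set.Ioo (0:ℝ) π, W p = 0 := fun p hp => h0 p fun h => hp (hKD h)
  set D2 : (Fin n → ℝ) × ℝ → (Fin n → ℝ) × ℝ → ℝ :=
    fun e p => fderiv ℝ (fun q => fderiv ℝ W q e) p e with hD2
  set ex : Fin n → (Fin n → ℝ) × ℝ := fun i => (Pi.single i 1, 0) with hex
  set ey : (Fin n → ℝ) × ℝ := (0, 1) with hey
  have : (volume : Measure ((Fin n → ℝ) × ℝ)).IsAddHaarMeasure :=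
    Measure.prod.instIsAddHaarMeasure volume volume
  have hibp := fun e => integral_mul_second_deriv (μ := (volume : Measure ((Fin n → ℝ) × ℝ)))
    hW hs e
  have hset : ∀ e, ∫ p in G ×ˢ Set.Ioo (0:ℝ) π, W p * D2 e p = - ∫ p, (fderiv ℝ W p e) ^ 2 := by
    intro e
    rw [← (hibp e).2.2]
    exact setIntegral_eq_integral_of_forall_compl_eq_zero fun p hp => by rw [hWoff p hp, zero_mul]
  have hcx : ∀ (x : Fin n → ℝ) (y : ℝ) (i : Fin n) (s : ℝ),
      HasDerivAt (fun r => ((Function.update x i r, y) : (Fin n → ℝ) × ℝ)) (ex i) s :=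
    fun x y i s => (hasDerivAt_update x i s).prodMk (hasDerivAt_const s y)
  have hcy : ∀ (x : Fin n → ℝ) (s : ℝ),
      HasDerivAt (fun r : ℝ => ((x, r) : (Fin n → ℝ) × ℝ)) ey s :=
    fun x s => (hasDerivAt_const s x).prodMk (hasDerivAt_id s)
  have hxx : ∀ x y i, iteratedDeriv 2 (fun s => U (Function.update x i s) y) (x i)
      = D2 (ex i) (x, y) := by
    intro x y i
    have := iteratedDeriv_two_comp hW (hcx x y i) (x i)
    rw [Function.update_eq_self] at this
    exact this
  have hyy : ∀ x y, iteratedDeriv 2 (U x) y = D2 ey (x, y) :=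
    fun x y => iteratedDeriv_two_comp hW (hcy x) y
  have hdy : ∀ x y, deriv (U x) y = fderiv ℝ W (x, y) ey := fun x y =>
    ((hW.differentiable two_ne_zero (x, y)).hasFDerivAt.comp_hasDerivAt y (hcy x y)).deriv
  have hid : ∀ z ∈ G ×ˢ Set.Ioo (0:ℝ) π, U z.1 z.2 * rhs z.1 z.2
      = U z.1 z.2 * cap z.1 z.2 - (∑ i, W z * D2 (ex i) z) - W z * D2 ey z := by
    rintro ⟨x, y⟩ ⟨hx, hy⟩
    simp only at hx hy ⊢
    rw [← hPDE x hx y hy, hyy, Finset.sum_congr rfl fun i _ => hxx x y i, ← Finset.mul_sum]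
    ring
  have iD2 : ∀ e, IntegrableOn (fun p => W p * D2 e p) (G ×ˢ Set.Ioo (0:ℝ) π) :=
    fun e => (hibp e).1.integrableOn
  have iS : IntegrableOn (fun z => ∑ i, W z * D2 (ex i) z) (G ×ˢ Set.Ioo (0:ℝ) π) :=
    integrable_finsetSum _ fun i _ => iD2 (ex i)
  have iCS : IntegrableOn (fun z => U z.1 z.2 * cap z.1 z.2 - ∑ i, W z * D2 (ex i) z)
      (G ×ˢ Set.Ioo (0:ℝ) π) := Integrable.sub hcap iS
  have irhs : IntegrableOn (fun z : (Fin n → ℝ) × ℝ => U z.1 z.2 * rhs z.1 z.2)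
      (G ×ˢ Set.Ioo (0:ℝ) π) :=
    (iCS.sub (iD2 ey)).congr_fun (fun z hz => (hid z hz).symm) hDm
  have hsplit : ∫ z in G ×ˢ Set.Ioo (0:ℝ) π, U z.1 z.2 * rhs z.1 z.2
      = (∫ z in G ×ˢ Set.Ioo (0:ℝ) π, U z.1 z.2 * cap z.1 z.2)
        + (∑ i, ∫ p, (fderiv ℝ W p (ex i)) ^ 2) + ∫ p, (fderiv ℝ W p ey) ^ 2 := by
    rw [setIntegral_congr_fun hDm hid, integral_sub iCS (iD2 ey), integral_sub hcap iS,
      integral_finsetSum _ fun i _ => iD2 (ex i), hset, Finset.sum_congr rfl fun i _ => hset (ex i),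
      Finset.sum_neg_distrib]
    ring
  have hsum : 0 ≤ ∑ i, ∫ p, (fderiv ℝ W p (ex i)) ^ 2 :=
    Finset.sum_nonneg fun i _ => integral_nonneg fun p => sq_nonneg _
  have hgrad : ∫ p in G ×ˢ Set.Ioo (0:ℝ) π, (fderiv ℝ W p ey) ^ 2 ≤ ∫ p, (fderiv ℝ W p ey) ^ 2 :=
    setIntegral_le_integral (hibp ey).2.1 (Filter.Eventually.of_forall fun p => sq_nonneg _)
  have igrad : IntegrableOn (fun p => (fderiv ℝ W p ey) ^ 2) (G ×ˢ Set.Ioo (0:ℝ) π) :=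
    (hibp ey).2.1.integrableOn
  have iW2 : IntegrableOn (fun p => (W p) ^ 2) (G ×ˢ Set.Ioo (0:ℝ) π) := by
    have h : Integrable (fun p => W p * W p) :=
      (hW.continuous.mul hW.continuous).integrable_of_hasCompactSupport hs.mul_right
    simpa only [sq] using h.integrableOn
  have hvol : (volume : Measure ((Fin n → ℝ) × ℝ)).restrict (G ×ˢ Set.Ioo (0:ℝ) π)
      = (volume.restrict G).prod (volume.restrict (Set.Ioo (0:ℝ) π)) := by
    rw [Measure.volume_eq_prod, Measure.prod_restrict]
  have jrhs : IntegrableOn (fun x => ∫ y in Set.Ioo (0:ℝ) π, U x y * rhs x y) G := by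
    rw [IntegrableOn, hvol] at irhs
    exact irhs.integral_prod_left
  have jgrad : IntegrableOn (fun x => l2sq (fun y => deriv (U x) y)) G := by
    rw [IntegrableOn, hvol] at igrad
    simpa only [IntegrableOn, l2sq, hdy] using igrad.integral_prod_left
  have jW2 : IntegrableOn (fun x => l2sq (U x)) G := by
    rw [IntegrableOn, hvol] at iW2
    exact iW2.integral_prod_left
  have e1 : ∫ z in G ×ˢ Set.Ioo (0:ℝ) π, U z.1 z.2 * rhs z.1 z.2
      = ∫ x in G, ∫ y in Set.Ioo (0:ℝ) π, U x y * rhs x y := by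
    rw [IntegrableOn, hvol] at irhs
    rw [hvol, integral_prod _ irhs]
  have e2 : ∫ p in G ×ˢ Set.Ioo (0:ℝ) π, (fderiv ℝ W p ey) ^ 2
      = ∫ x in G, l2sq (fun y => deriv (U x) y) := by
    rw [IntegrableOn, hvol] at igrad
    rw [hvol, integral_prod _ igrad]
    simp only [l2sq, hdy]
  have jLB : IntegrableOn (fun x => L * l2sq (U x) + B x) G := (jW2.const_mul L).add hB
  have e3 : ∫ x in G, ∫ y in Set.Ioo (0:ℝ) π, U x y * rhs x y
      ≤ L * (∫ x in G, l2sq (U x)) + (∫ x in G, B x)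
        + ∫ x in G, l2sq (fun y => deriv (U x) y) := by
    rw [← integral_const_mul, ← integral_add (jW2.const_mul L) hB, ← integral_add jLB jgrad]
    exact setIntegral_mono_on jrhs (jLB.add jgrad) hG.measurableSet hslice
  have e4 : ∫ x in G, ∫ y in Set.Ioo (0:ℝ) π, (U x y) ^ 2 = ∫ x in G, l2sq (U x) := rfl
  rw [e4]
  linarith

/-! ### Integrals depending on time -/

lemma param_integral {X : Type*} [MetricSpace X] [SecondCountableTopology X]
    [MeasurableSpace X] [BorelSpace X] {μ : Measure X} [SFinite μ] [IsFiniteMeasureOnCompacts μ]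
    {S C : Set X} (hC : IsCompact C) (hSC : S ⊆ C) {T : ℝ} {p : ℝ → X → ℝ}
    (hp : ContinuousOn (fun q : ℝ × X => p q.1 q.2) (Set.Icc 0 T ×ˢ C)) :
    (∀ s ∈ Set.Icc 0 T, IntegrableOn (p s) S μ) ∧
    AEStronglyMeasurable (fun s => ∫ x in S, p s x ∂μ) (volume.restrict (Set.Ioo 0 T)) ∧
    ∃ M, ∀ s ∈ Set.Icc 0 T, |∫ x in S, p s x ∂μ| ≤ M := by
  refine ⟨fun s hs => ?_, ?_, ?_⟩
  · have h : ContinuousOn (p s) C :=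
      hp.comp (f := fun x => (s, x)) (by fun_prop) fun x hx => ⟨hs, hx⟩
    exact (h.integrableOn_compact hC).mono_set hSC
  · have h : IntegrableOn (fun q : ℝ × X => p q.1 q.2) (Set.Icc 0 T ×ˢ C) (volume.prod μ) :=
      hp.integrableOn_compact (isCompact_Icc.prod hC)
    have h2 := h.mono_set (Set.prod_mono (Set.Ioo_subset_Icc_self (a := (0:ℝ)) (b := T)) hSC)
    rw [IntegrableOn, ← Measure.prod_restrict] at h2
    exact h2.integral_prod_left.aestronglyMeasurable
  · obtain ⟨M, hM⟩ := (isCompact_Icc.prod hC).exists_bound_of_continuousOn hp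
    refine ⟨M * μ.real S, fun s hs => ?_⟩
    exact norm_setIntegral_le_of_norm_le_const ((measure_mono hSC).trans_lt hC.measure_lt_top)
      fun x hx => hM (s, x) ⟨hs, hSC hx⟩

lemma continuousOn_comp_of_lipschitz {h : ℝ → ℝ → ℝ} {v : ℝ → ℝ} {S : Set ℝ} {ℓ : ℝ} (hℓ : 0 ≤ ℓ)
    (hc : ∀ r, ContinuousOn (fun y => h y r) S)
    (hl : ∀ y ∈ S, ∀ r r' : ℝ, |h y r - h y r'| ≤ ℓ * |r - r'|) (hv : ContinuousOn v S) :
    ContinuousOn (fun y => h y (v y)) S := by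
  have h1 : ContinuousOn (fun q : ℝ × ℝ => h q.1 q.2) (S ×ˢ Set.univ) := by
    refine continuousOn_prod_of_continuousOn_lipschitzOnWith' _ ⟨ℓ, hℓ⟩ (fun y hy => ?_)
      (fun r _ => hc r)
    refine LipschitzOnWith.of_dist_le_mul fun r _ r' _ => ?_
    exact hl y hy r r'
  exact h1.comp (f := fun y => (y, v y)) (continuousOn_id.prodMk hv) fun y hy => ⟨hy, trivial⟩

/-- A priori estimate for a classical solution `u` of the nonlinear subdiffusion
equation `D_t^α u - Δ_x u - u_{yy} = g(t,x,y,u) + f(t,x,y) h(t,x)` with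
`h` given by the quotient formula: for a.e. `t ∈ [0,T]`,
`‖u(t)‖² ≤ ‖φ‖² E_α(2L_ω² t^α) + Γ(α) E_{α,α}(2L_ω² t^α) J^α c₂(t)`. -/
theorem classical_solution_L2_estimate
    (T α : ℝ) (hT : 0 < T) (hα : 0 < α) (hα1 : α < 1) (n : ℕ) (hn : 1 ≤ n)
    (G : Set (Fin n → ℝ)) (hGopen : IsOpen G) (hGbdd : Bornology.IsBounded G)
    -- ω ∈ C¹([0,π]) with ω(0) = ω(π) = 0 and ‖ω'‖ > 0
    (ω ω' : ℝ → ℝ)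
    (hω_diff : ∀ y ∈ Set.Icc (0:ℝ) π, HasDerivAt ω (ω' y) y)
    (hω'_cont : ContinuousOn ω' (Set.Icc 0 π))
    (hω0 : ω 0 = 0) (hωπ : ω π = 0)
    (hω'_pos : 0 < l2sq ω')
    (f_M ℓ₀ : ℝ) (hfM : 0 < f_M) (hℓ₀ : 0 < ℓ₀)
    -- f continuous, (f(t,x,·),ω) ≠ 0, |f| ≤ (f_M/√π)|(f(t,x,·),ω)|
    (f : ℝ → (Fin n → ℝ) → ℝ → ℝ)
    (hf_cont : ContinuousOn (fun p : ℝ × (Fin n → ℝ) × ℝ => f p.1 p.2.1 p.2.2)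
      (Set.Icc 0 T ×ˢ closure G ×ˢ Set.Icc 0 π))
    (hf_ne : ∀ t ∈ Set.Icc (0:ℝ) T, ∀ x ∈ closure G, l2ip (f t x) ω ≠ 0)
    (hf_bd : ∀ t ∈ Set.Icc (0:ℝ) T, ∀ x ∈ closure G, ∀ y ∈ Set.Icc (0:ℝ) π,
      |f t x y| ≤ (f_M / Real.sqrt π) * |l2ip (f t x) ω|)
    -- g continuous and ℓ₀-Lipschitz in the last variable
    (g : ℝ → (Fin n → ℝ) → ℝ → ℝ → ℝ)
    (hg_cont : ∀ u : ℝ, ContinuousOn (fun p : ℝ × (Fin n → ℝ) × ℝ => g p.1 p.2.1 p.2.2 u)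
      (Set.Icc 0 T ×ˢ closure G ×ˢ Set.Icc 0 π))
    (hg_lip : ∀ t ∈ Set.Icc (0:ℝ) T, ∀ x ∈ closure G, ∀ y ∈ Set.Icc (0:ℝ) π,
      ∀ u v : ℝ, |g t x y u - g t x y v| ≤ ℓ₀ * |u - v|)
    -- a continuous
    (a : ℝ → (Fin n → ℝ) → ℝ)
    (ha_cont : ContinuousOn (fun p : ℝ × (Fin n → ℝ) => a p.1 p.2)
      (Set.Icc 0 T ×ˢ closure G))
    -- the classical solution u with time derivative ut and initial datum φ
    (u ut : ℝ → (Fin n → ℝ) → ℝ → ℝ) (φ : (Fin n → ℝ) → ℝ → ℝ)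
    (hφ_L2 : IntegrableOn (fun p : (Fin n → ℝ) × ℝ => (φ p.1 p.2) ^ 2)
      (G ×ˢ Set.Ioo 0 π))
    (hu_bdd : ∃ C : ℝ, ∀ t ∈ Set.Icc (0:ℝ) T, ∀ x ∈ closure G,
      ∀ y ∈ Set.Icc (0:ℝ) π, |u t x y| ≤ C)
    (hu_cont : ContinuousOn (fun p : ℝ × (Fin n → ℝ) × ℝ => u p.1 p.2.1 p.2.2)
      (Set.Icc 0 T ×ˢ closure G ×ˢ Set.Icc 0 π))
    (hu_space : ∀ t ∈ Set.Icc (0:ℝ) T,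
      ContDiffOn ℝ 2 (fun p : (Fin n → ℝ) × ℝ => u t p.1 p.2)
        (closure G ×ˢ Set.Icc 0 π))
    -- homogeneous Dirichlet boundary conditions via compact support in D
    (hu_supp : ∃ K : Set ((Fin n → ℝ) × ℝ), IsCompact K ∧ K ⊆ G ×ˢ Set.Ioo 0 π ∧
      ∀ t ∈ Set.Icc (0:ℝ) T, ∀ p : (Fin n → ℝ) × ℝ, p ∉ K → u t p.1 p.2 = 0)
    -- differentiability in time on (0,T], continuity and integrability of ∂ₜu
    (hu_t : ∀ t ∈ Set.Ioc (0:ℝ) T, ∀ x ∈ closure G, ∀ y ∈ Set.Icc (0:ℝ) π,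
      HasDerivAt (fun s => u s x y) (ut t x y) t)
    (hut_cont : ∀ x ∈ closure G, ∀ y ∈ Set.Icc (0:ℝ) π,
      ContinuousOn (fun s => ut s x y) (Set.Ioc 0 T))
    (hut_int : IntegrableOn (fun q : ℝ × ((Fin n → ℝ) × ℝ) => ut q.1 q.2.1 q.2.2)
      (Set.Ioc 0 T ×ˢ G ×ˢ Set.Ioo 0 π))
    -- initial condition
    (hu0 : ∀ x y, u 0 x y = φ x y)
    -- the equation D_t^α u - Δ_x u - u_{yy} = g(t,x,y,u) + f(t,x,y) h(t,x)
    (hPDE : ∀ t ∈ Set.Ioc (0:ℝ) T, ∀ x ∈ G, ∀ y ∈ Set.Ioo (0:ℝ) π,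
      caputo α (fun s => ut s x y) t
        - (∑ i, iteratedDeriv 2 (fun s => u t (Function.update x i s) y) (x i))
        - iteratedDeriv 2 (u t x) y
      = g t x y (u t x y)
        + f t x y *
          ((a t x - l2ip (fun z => g t x z (u t x z)) ω
              + l2ip (fun z => deriv (u t x) z) ω') / l2ip (f t x) ω))
    -- t ↦ ‖u(t,·,·)‖²_{L²(D)} is absolutely continuous on [0,T]
    (N' : ℝ → ℝ) (hN'_int : IntegrableOn N' (Set.Ioo 0 T))
    (hN_AC : ∀ t ∈ Set.Icc (0:ℝ) T,
      (∫ x in G, ∫ y in Set.Ioo (0:ℝ) π, (u t x y) ^ 2)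
        = (∫ x in G, ∫ y in Set.Ioo (0:ℝ) π, (u 0 x y) ^ 2)
          + ∫ s in (0:ℝ)..t, N' s) :
    ∀ᵐ t ∂(volume.restrict (Set.Icc (0:ℝ) T)),
      (∫ x in G, ∫ y in Set.Ioo (0:ℝ) π, (u t x y) ^ 2)
        ≤ (∫ x in G, ∫ y in Set.Ioo (0:ℝ) π, (φ x y) ^ 2) *
            mittagLeffler α 1
              (2 * (ℓ₀ ^ 2 * l2sq ω / l2sq ω' + (3 / 2) * f_M ^ 2 * l2sq ω'
                + ℓ₀ + 1 / 2) * t ^ α)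
          + Real.Gamma α *
            mittagLeffler α α
              (2 * (ℓ₀ ^ 2 * l2sq ω / l2sq ω' + (3 / 2) * f_M ^ 2 * l2sq ω'
                + ℓ₀ + 1 / 2) * t ^ α) *
            rlInt α
              (fun s => (1 + 2 * l2sq ω / l2sq ω') *
                  (∫ x in G, ∫ y in Set.Ioo (0:ℝ) π, (g s x y 0) ^ 2)
                + (∫ x in G, (a s x) ^ 2) / l2sq ω') t := by
  set D : Set ((Fin n → ℝ) × ℝ) := G ×ˢ Set.Ioo (0:ℝ) π with hD
  set C : Set ((Fin n → ℝ) × ℝ) := closure G ×ˢ Set.Icc (0:ℝ) π with hCdef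
  have hGc : IsCompact (closure G) := hGbdd.isCompact_closure
  have hC : IsCompact C := hGc.prod isCompact_Icc
  have hDC : D ⊆ C := Set.prod_mono subset_closure Set.Ioo_subset_Icc_self
  have hDo : IsOpen D := hGopen.prod isOpen_Ioo
  have hDm : MeasurableSet D := hDo.measurableSet
  have : IsFiniteMeasure (volume.restrict D) :=
    ⟨by rw [Measure.restrict_apply_univ]; exact (measure_mono hDC).trans_lt hC.measure_lt_top⟩
  obtain ⟨K, hK, hKD, hKu⟩ := hu_supp
  obtain ⟨Cu, hCu⟩ := hu_bdd
  have hω_cont : ContinuousOn ω (Set.Icc 0 π) := fun y hy =>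
    (hω_diff y hy).continuousAt.continuousWithinAt
  set L := ℓ₀ ^ 2 * l2sq ω / l2sq ω' + (3 / 2) * f_M ^ 2 * l2sq ω' + ℓ₀ + 1 / 2 with hL
  have hω_nn := l2sq_nonneg ω
  have hL0 : 0 ≤ L := by positivity
  -- iterated integrals over `G` and `(0,π)` are integrals over `D`
  have hfub : ∀ q : (Fin n → ℝ) → ℝ → ℝ,
      IntegrableOn (fun z : (Fin n → ℝ) × ℝ => q z.1 z.2) D →
      ∫ z in D, q z.1 z.2 = ∫ x in G, ∫ y in Set.Ioo (0:ℝ) π, q x y := by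
    intro q hq
    rw [Measure.volume_eq_prod] at hq ⊢
    exact setIntegral_prod _ hq
  obtain ⟨iu, hNm, MN, hMN⟩ := param_integral (μ := volume) (S := D) hC hDC
    (p := fun s z => (u s z.1 z.2) ^ 2) (hu_cont.pow 2)
  obtain ⟨ig, hgm, Mg, hMg⟩ := param_integral (μ := volume) (S := D) hC hDC
    (p := fun s z => (g s z.1 z.2 0) ^ 2) ((hg_cont 0).pow 2)
  obtain ⟨ia, ham, Ma, hMa⟩ := param_integral (μ := volume) (S := G) hGc subset_closure
    (p := fun s x => (a s x) ^ 2) (ha_cont.pow 2)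
  set N : ℝ → ℝ := fun s => ∫ z in D, (u s z.1 z.2) ^ 2 with hN
  set c : ℝ → ℝ := fun s => (1 + 2 * l2sq ω / l2sq ω') * (∫ z in D, (g s z.1 z.2 0) ^ 2)
    + (∫ x in G, (a s x) ^ 2) / l2sq ω' with hc
  have hNeq : ∀ s ∈ Set.Icc 0 T, N s = ∫ x in G, ∫ y in Set.Ioo (0:ℝ) π, (u s x y) ^ 2 :=
    fun s hs => hfub (fun x y => (u s x y) ^ 2) (iu s hs)
  have hgeq : ∀ s ∈ Set.Icc 0 T, (∫ z in D, (g s z.1 z.2 0) ^ 2)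
      = ∫ x in G, ∫ y in Set.Ioo (0:ℝ) π, (g s x y 0) ^ 2 :=
    fun s hs => hfub (fun x y => (g s x y 0) ^ 2) (ig s hs)
  have hcm : AEStronglyMeasurable c (volume.restrict (Set.Ioo 0 T)) :=
    by
    simp only [hc, div_eq_mul_inv]
    exact (hgm.const_mul _).add (ham.mul_const _)
  have hN0 : ∀ s, 0 ≤ N s := fun s => integral_nonneg fun z => sq_nonneg _
  have hc0 : ∀ s, 0 ≤ c s := by
    intro s
    have h1 : 0 ≤ ∫ z in D, (g s z.1 z.2 0) ^ 2 := integral_nonneg fun z => sq_nonneg _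
    have h2 : 0 ≤ ∫ x in G, (a s x) ^ 2 := integral_nonneg fun z => sq_nonneg _
    simp only [hc]
    positivity
  have hNb : ∀ s ∈ Set.Icc 0 T, N s ≤ MN := fun s hs => (le_abs_self _).trans (hMN s hs)
  have hcb : ∀ s ∈ Set.Icc 0 T, c s ≤ (1 + 2 * l2sq ω / l2sq ω') * Mg + Ma / l2sq ω' := by
    intro s hs
    have h1 := (le_abs_self _).trans (hMg s hs)
    have h2 := (le_abs_self _).trans (hMa s hs)
    simp only [hc]
    gcongr
  -- the energy estimate at a fixed time at which `u D^α u` is integrable over `D`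
  have hspace : ∀ s ∈ Set.Ioc 0 T,
      Integrable (fun z : (Fin n → ℝ) × ℝ => u s z.1 z.2 * caputo α (fun r => ut r z.1 z.2) s)
        (volume.restrict D) →
      ∫ z in D, u s z.1 z.2 * caputo α (fun r => ut r z.1 z.2) s
        ≤ L * N s + (1 / 2) * c s := by
    intro s hs hintg
    have hs' : s ∈ Set.Icc 0 T := Set.Ioc_subset_Icc_self hs
    have jg : IntegrableOn (fun x => l2sq (fun y => g s x y 0)) G := by
      have h := ig s hs'
      rw [Measure.volume_eq_prod, IntegrableOn, ← Measure.prod_restrict] at h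
      exact h.integral_prod_left
    have ja := ia s hs'
    have jB1 := jg.const_mul (1 + 2 * l2sq ω / l2sq ω')
    have jB2 := ja.div_const (l2sq ω')
    have jB : IntegrableOn (fun x => (1 / 2) * ((1 + 2 * l2sq ω / l2sq ω') *
        l2sq (fun y => g s x y 0) + (a s x) ^ 2 / l2sq ω')) G := (jB1.add jB2).const_mul _
    have hu2 : ContDiffOn ℝ 2 (fun p : (Fin n → ℝ) × ℝ => u s p.1 p.2) D :=
      (hu_space s hs').mono hDC
    have hW : ContDiff ℝ 2 (fun p : (Fin n → ℝ) × ℝ => u s p.1 p.2) :=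
      contDiff_of_compact_support hDo hK hKD hu2 (hKu s hs')
    have key := spatial_estimate (n := n) (L := L) hGopen hK hKD hu2 (hKu s hs') hintg
      (hPDE s hs) jB (fun x hx => by
        have hxc : x ∈ closure G := subset_closure hx
        have hline : ContinuousOn (fun y : ℝ => ((s, x, y) : ℝ × (Fin n → ℝ) × ℝ))
          (Set.Icc 0 π) := by fun_prop
        have hmaps : Set.MapsTo (fun y : ℝ => ((s, x, y) : ℝ × (Fin n → ℝ) × ℝ))
          (Set.Icc 0 π) (Set.Icc 0 T ×ˢ closure G ×ˢ Set.Icc 0 π) := fun y hy => ⟨hs', hxc, hy⟩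
        have hUx : ContDiff ℝ 2 (u s x) :=
          hW.comp (contDiff_const.prodMk contDiff_id : ContDiff ℝ 2 fun y : ℝ => (x, y))
        have hcU : ContinuousOn (u s x) (Set.Icc 0 π) := hUx.continuous.continuousOn
        have hcg : ∀ r, ContinuousOn (fun y => g s x y r) (Set.Icc 0 π) :=
          fun r => (hg_cont r).comp hline hmaps
        exact slice_estimate (U := u s x) (U' := fun z => deriv (u s x) z)
          (gU := fun z => g s x z (u s x z)) (g0 := fun y => g s x y 0) (F := f s x) hcU
          (hUx.continuous_deriv (by norm_num)).continuousOn
          (continuousOn_comp_of_lipschitz hℓ₀.le hcg (hg_lip s hs' x hxc) hcU) (hcg 0)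
          (hf_cont.comp hline hmaps) hω_cont hω'_cont hω'_pos hfM hℓ₀ (hf_ne s hs' x hxc)
          (hf_bd s hs' x hxc)
          (fun y hy => by simpa using hg_lip s hs' x hxc y hy (u s x y) 0))
    have hBint : ∫ x in G, (1 / 2) * ((1 + 2 * l2sq ω / l2sq ω') *
        l2sq (fun y => g s x y 0) + (a s x) ^ 2 / l2sq ω') = (1 / 2) * c s := by
      rw [integral_const_mul, integral_add jB1 jB2, integral_const_mul, integral_div]
      simp only [hc]
      rw [hgeq s hs']
      rfl
    rw [hBint, ← hNeq s hs'] at key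
    exact key
  -- the fractional integral inequality for the energy
  have hineq : ∀ t ∈ Set.Ioc 0 T, N t ≤ N 0 + rlInt α (fun s => (2 * L) * N s + c s) t := by
    intro t ht
    have hsub : Set.Ioo 0 t ×ˢ D ⊆ Set.Icc 0 T ×ˢ C :=
      Set.prod_mono (fun s hs => ⟨hs.1.le, hs.2.le.trans ht.2⟩) hDC
    have hprod : (volume.restrict (Set.Ioo 0 t)).prod
        ((volume : Measure ((Fin n → ℝ) × ℝ)).restrict D)
        = (volume : Measure (ℝ × (Fin n → ℝ) × ℝ)).restrict (Set.Ioo 0 t ×ˢ D) := by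
      rw [Measure.prod_restrict]
      rfl
    have hum : AEStronglyMeasurable (fun q : ℝ × ((Fin n → ℝ) × ℝ) => u q.1 q.2.1 q.2.2)
        ((volume.restrict (Set.Ioo 0 t)).prod (volume.restrict D)) := by
      rw [hprod]
      exact (hu_cont.mono hsub).aestronglyMeasurable (measurableSet_Ioo.prod hDm)
    have hub : ∀ᵐ q : ℝ × ((Fin n → ℝ) × ℝ)
        ∂((volume.restrict (Set.Ioo 0 t)).prod (volume.restrict D)),
        |u q.1 q.2.1 q.2.2| ≤ Cu := by
      rw [hprod]
      exact ae_restrict_of_forall_mem (measurableSet_Ioo.prod hDm) fun q hq =>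
        hCu q.1 (hsub hq).1 q.2.1 (hsub hq).2.1 q.2.2 (hsub hq).2.2
    have hi : Integrable (fun q : ℝ × ((Fin n → ℝ) × ℝ) => ut q.1 q.2.1 q.2.2)
        ((volume.restrict (Set.Ioo 0 t)).prod (volume.restrict D)) := by
      rw [hprod]
      exact hut_int.mono_set (Set.prod_mono (fun s hs => ⟨hs.1, hs.2.le.trans ht.2⟩) le_rfl)
    have hcz : ∀ᵐ z : (Fin n → ℝ) × ℝ ∂(volume.restrict D),
        ContinuousOn (fun s => u s z.1 z.2) (Set.Icc 0 t) := by
      refine ae_restrict_of_forall_mem hDm fun z hz => ?_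
      exact hu_cont.comp (f := fun s : ℝ => ((s, z.1, z.2) : ℝ × (Fin n → ℝ) × ℝ)) (by fun_prop)
        fun s hs => ⟨⟨hs.1, hs.2.trans ht.2⟩, hDC hz⟩
    have hdz : ∀ᵐ z : (Fin n → ℝ) × ℝ ∂(volume.restrict D), ∀ s ∈ Set.Ioc 0 t,
        HasDerivAt (fun s => u s z.1 z.2) (ut s z.1 z.2) s :=
      ae_restrict_of_forall_mem hDm fun z hz s hs =>
        hu_t s ⟨hs.1, hs.2.trans ht.2⟩ z.1 (hDC hz).1 z.2 (hDC hz).2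
    have hE := energy_le_rlInt (u := fun s (z : (Fin n → ℝ) × ℝ) => u s z.1 z.2)
        (ut := fun s (z : (Fin n → ℝ) × ℝ) => ut s z.1 z.2)
      hα hα1 ht.1 hum hub (iu 0 ⟨le_rfl, hT.le⟩) (iu t ⟨ht.1.le, ht.2⟩) hcz hdz hi
    have hJ := rlInt_mono (q := fun s => (2 * L) * N s + c s) hα ht.1.le
      (integrableOn_energy (u := fun s (z : (Fin n → ℝ) × ℝ) => u s z.1 z.2)
        (ut := fun s (z : (Fin n → ℝ) × ℝ) => ut s z.1 z.2)
        hα hα1 hum hub hi)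
      (integrableOn_rlInt_bdd
        (C := (2 * L) * MN + ((1 + 2 * l2sq ω / l2sq ω') * Mg + Ma / l2sq ω')) hα
        (((hNm.const_mul _).add hcm).mono_set (Set.Ioo_subset_Ioo_right ht.2))
        (fun s hs => by
          have hs' : s ∈ Set.Icc 0 T := ⟨hs.1.le, hs.2.le.trans ht.2⟩
          have := hN0 s
          have := hc0 s
          rw [abs_of_nonneg (by positivity)]
          have := hNb s hs'
          have := hcb s hs'
          gcongr))
      (by
        filter_upwards [ae_integrable_energy (u := fun s (z : (Fin n → ℝ) × ℝ) => u s z.1 z.2)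
          (ut := fun s (z : (Fin n → ℝ) × ℝ) => ut s z.1 z.2) hα hα1 hum hub hi,
          ae_restrict_mem measurableSet_Ioo] with s hsi hs
        have h := hspace s ⟨hs.1, hs.2.le.trans ht.2⟩ hsi
        simp only [mul_assoc]
        rw [integral_const_mul]
        linarith)
    linarith
  have hfinal : ∀ t ∈ Set.Ioc 0 T, N t ≤ N 0 * mittagLeffler α 1 (2 * L * t ^ α)
      + Real.Gamma α * mittagLeffler α α (2 * L * t ^ α) * rlInt α c t := fun t ht =>
    fractional_gronwall hα (by positivity) (hN0 0) hNm hcm (fun s _ => hN0 s)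
      (fun s hs => hNb s (Set.Ioo_subset_Icc_self hs)) (fun s _ => hc0 s)
      (fun s hs => hcb s (Set.Ioo_subset_Icc_self hs)) hineq ht
  rw [← restrict_Ioc_eq_restrict_Icc]
  refine ae_restrict_of_forall_mem measurableSet_Ioc fun t ht => ?_
  have h := hfinal t ht
  have hrl : rlInt α c t = rlInt α (fun s => (1 + 2 * l2sq ω / l2sq ω') *
      (∫ x in G, ∫ y in Set.Ioo (0:ℝ) π, (g s x y 0) ^ 2)
        + (∫ x in G, (a s x) ^ 2) / l2sq ω') t := by
    rw [rlInt_eq_setIntegral ht.1.le, rlInt_eq_setIntegral ht.1.le]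
    congr 1
    refine setIntegral_congr_fun measurableSet_Ioo fun s hs => ?_
    simp only [hc]
    rw [hgeq s ⟨hs.1.le, hs.2.le.trans ht.2⟩]
  rw [hNeq t ⟨ht.1.le, ht.2⟩, hNeq 0 ⟨le_rfl, hT.le⟩, hrl] at h
  simp only [hu0] at h
  exact h
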